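/- arXiv:1208.3818 — 2 statements merged into one kernel-verified Lean document; each statement's English description precedes it below -/
import Mathlib

section
/- If ψ_1 and ψ_2 are both admissible phases (i.e. both satisfy conditions (a)–(e)), then ψ_1 − ψ_2 vanishes to infinite order at (0,0): all partial derivatives of ψ_1 − ψ_2 in the 4n underlying real variables vanish at (0,0). In other words, the Taylor expansion of an admissible phase at (0,0) is uniquely determined. -/
open Complex Asymptotics

attribute [local instance] Classical.propDecidable

noncomputable section

/-- `ℂⁿ` as `Fin n → ℂ`. -/
abbrev Cn (n : ℕ) := Fin n → ℂ

/-- Wirtinger derivative `∂/∂z_j = (1/2)(∂/∂x_{2j-1} − i ∂/∂x_{2j})`. -/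
def wd {n : ℕ} (j : Fin n) (f : Cn n → ℂ) : Cn n → ℂ := fun z =>
  (1 / 2 : ℂ) *
    (fderiv ℝ f z (Pi.single j 1) - Complex.I * fderiv ℝ f z (Pi.single j Complex.I))

/-- Wirtinger derivative `∂/∂z̄_j = (1/2)(∂/∂x_{2j-1} + i ∂/∂x_{2j})`. -/
def wdb {n : ℕ} (j : Fin n) (f : Cn n → ℂ) : Cn n → ℂ := fun z =>
  (1 / 2 : ℂ) *
    (fderiv ℝ f z (Pi.single j 1) + Complex.I * fderiv ℝ f z (Pi.single j Complex.I))

/-- A real-valued function regarded as complex-valued. -/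
def cplx {n : ℕ} (φ : Cn n → ℝ) : Cn n → ℂ := fun z => (φ z : ℂ)

/-- `φ` is smooth and `φ(z) = Σ_j λ_j |z_j|² + O(|z|³)` as `z → 0`. -/
def PhiOK {n : ℕ} (lam : Fin n → ℝ) (φ : Cn n → ℝ) : Prop :=
  ContDiff ℝ (⊤ : ℕ∞) φ ∧
    (fun z : Cn n => φ z - ∑ j, lam j * Complex.normSq (z j)) =O[nhds 0] fun z => ‖z‖ ^ 3

/-- The conditions (a)–(e) on the phase function `ψ`. -/
def Admissible {n : ℕ} (lam : Fin n → ℝ) (φ : Cn n → ℝ) (ψ : Cn n → Cn n → ℂ) : Prop :=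
  ContDiff ℝ (⊤ : ℕ∞) (fun p : Cn n × Cn n => ψ p.1 p.2) ∧
  -- (a)
  (∀ z, ψ z z = 0) ∧
  (∀ z w, ψ z w = - (starRingEnd ℂ) (ψ w z)) ∧
  -- (b)
  (∃ c : ℝ, 0 < c ∧ ∀ z w, c * ‖z - w‖ ^ 2 ≤ (ψ z w).im) ∧
  -- (c): on the diagonal, ∂ψ/∂z̄_j = i ∂φ/∂z̄_j, ∂ψ/∂z_j = −i ∂φ/∂z_j,
  --      ∂ψ/∂w̄_j = −i ∂φ/∂z̄_j, ∂ψ/∂w_j = i ∂φ/∂z_j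
  (∀ (z : Cn n) (j : Fin n), wdb j (fun x => ψ x z) z = Complex.I * wdb j (cplx φ) z) ∧
  (∀ (z : Cn n) (j : Fin n), wd j (fun x => ψ x z) z = - Complex.I * wd j (cplx φ) z) ∧
  (∀ (z : Cn n) (j : Fin n), wdb j (fun w => ψ z w) z = - Complex.I * wdb j (cplx φ) z) ∧
  (∀ (z : Cn n) (j : Fin n), wd j (fun w => ψ z w) z = Complex.I * wd j (cplx φ) z) ∧
  -- (d): Σ_j (i ∂ψ/∂z̄_j + ∂φ/∂z̄_j)(−i ∂ψ/∂z_j + ∂φ/∂z_j) vanishes to infinite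
  --      order on the diagonal
  (∀ (m : ℕ) (z : Cn n),
    iteratedFDeriv ℝ m
      (fun p : Cn n × Cn n =>
        ∑ j, (Complex.I * wdb j (fun x => ψ x p.2) p.1 + wdb j (cplx φ) p.1) *
             (- Complex.I * wd j (fun x => ψ x p.2) p.1 + wd j (cplx φ) p.1))
      (z, z) = 0) ∧
  -- (e)
  ((fun p : Cn n × Cn n =>
      ψ p.1 p.2 -
        (Complex.I * ∑ j, ((|lam j| * Complex.normSq (p.1 j - p.2 j) : ℝ) : ℂ)
          + Complex.I * ∑ j, ((lam j : ℝ) : ℂ) *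
              ((starRingEnd ℂ) (p.1 j) * p.2 j - (starRingEnd ℂ) (p.2 j) * p.1 j)))
    =O[nhds 0] fun p => ‖p‖ ^ 3)

/-!
Let `u` be the difference of two admissible phases. Subtracting the two eikonal equations (d) and
replacing the first-order factors by their linear parts at the origin, which (e) and the expansion
of `φ` determine, gives `∑ j, 2 |λ_j| a_j D_j u = 0` up to an error vanishing to one order more than
`u`, where `D_j = ∂/∂z̄_j` and `a_j = conj (z_j - w_j)` if `λ_j > 0`, and `D_j = ∂/∂z_j` and
`a_j = z_j - w_j` if `λ_j < 0`. The `a_j` are dual to the `D_j`, so moving `D_k` past this operator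
adds the positive constant `2 |λ_k|` to it; a weighted Euler operator plus a positive constant is
injective on Taylor expansions, so `D_k u` vanishes to the same order as `u`. By antisymmetry the
same holds for the reflected derivatives in `w`. Together with the directions tangent to the
diagonal, where `u` is zero, all these directions span, so the order of vanishing of `u` goes up by
one.
-/

open scoped ContDiff TensorProduct

section VanishingOrder

variable {V F G : Type*} [NormedAddCommGroup V] [NormedSpace ℝ V] [NormedAddCommGroup F]
  [NormedSpace ℝ F] [NormedAddCommGroup G] [NormedSpace ℝ G]

lemma contDiff_fderiv_apply {f : V → F} (hf : ContDiff ℝ ∞ f) (v : V) :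
    ContDiff ℝ ∞ fun p => fderiv ℝ f p v :=
  (hf.fderiv_right (m := ∞) le_rfl).clm_apply contDiff_const

/-- `f` is smooth and its Taylor polynomial of degree `< N` at `x` vanishes, i.e.
`f = O(|y - x| ^ N)`. Smoothness is included so that the notion is stable under products
and derivatives. -/
structure VanishesToOrder (N : ℕ) (f : V → F) (x : V) : Prop where
  contDiff : ContDiff ℝ ∞ f
  iteratedFDeriv_eq_zero : ∀ m < N, iteratedFDeriv ℝ m f x = 0

namespace VanishesToOrder

variable {M N : ℕ} {f g : V → F} {x : V}

lemma of_contDiff (hf : ContDiff ℝ ∞ f) : VanishesToOrder 0 f x :=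
  ⟨hf, fun _ hm => absurd hm (Nat.not_lt_zero _)⟩

lemma eq_zero (hf : VanishesToOrder (N + 1) f x) : f x = 0 := by
  simpa using DFunLike.congr_fun (hf.iteratedFDeriv_eq_zero 0 N.succ_pos) 0

lemma zero : VanishesToOrder N (0 : V → F) x :=
  ⟨contDiff_const, fun _ _ => by simp⟩

lemma add (hf : VanishesToOrder N f x) (hg : VanishesToOrder N g x) :
    VanishesToOrder N (f + g) x :=
  ⟨hf.contDiff.add hg.contDiff, fun m hm => by
    rw [iteratedFDeriv_add_apply (contDiff_infty.1 hf.contDiff m).contDiffAt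
      (contDiff_infty.1 hg.contDiff m).contDiffAt, hf.iteratedFDeriv_eq_zero m hm,
      hg.iteratedFDeriv_eq_zero m hm, add_zero]⟩

lemma clm_comp (hf : VanishesToOrder N f x) (L : F →L[ℝ] G) :
    VanishesToOrder N (fun p => L (f p)) x :=
  ⟨L.contDiff.comp hf.contDiff, fun m hm => by
    change iteratedFDeriv ℝ m (L ∘ f) x = 0
    rw [L.iteratedFDeriv_comp_left hf.contDiff.contDiffAt (i := m) (mod_cast le_top),
      hf.iteratedFDeriv_eq_zero m hm]
    ext; simp⟩

lemma comp_clm {f : F → G} {L : V →L[ℝ] F} {x : V} (hf : VanishesToOrder N f (L x)) :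
    VanishesToOrder N (fun p => f (L p)) x :=
  ⟨hf.contDiff.comp L.contDiff, fun m hm => by
    change iteratedFDeriv ℝ m (f ∘ L) x = 0
    rw [L.iteratedFDeriv_comp_right hf.contDiff x (i := m) (mod_cast le_top),
      hf.iteratedFDeriv_eq_zero m hm]
    ext; simp⟩

lemma const_smul {R : Type*} [Monoid R] [DistribMulAction R F] [SMulCommClass ℝ R F]
    [ContinuousConstSMul R F] (hf : VanishesToOrder N f x) (c : R) : VanishesToOrder N (c • f) x :=
  hf.clm_comp (c • .id ℝ F)

lemma neg (hf : VanishesToOrder N f x) : VanishesToOrder N (-f) x :=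
  hf.clm_comp (-ContinuousLinearMap.id ℝ F)

lemma sub (hf : VanishesToOrder N f x) (hg : VanishesToOrder N g x) :
    VanishesToOrder N (f - g) x :=
  sub_eq_add_neg f g ▸ hf.add hg.neg

lemma sum {ι : Type*} (s : Finset ι) {f : ι → V → F}
    (hf : ∀ i ∈ s, VanishesToOrder N (f i) x) : VanishesToOrder N (∑ i ∈ s, f i) x :=
  Finset.sum_induction f (VanishesToOrder N · x) (fun _ _ => add) zero hf

lemma smul {𝕜 : Type*} [NontriviallyNormedField 𝕜] [NormedAlgebra ℝ 𝕜] [NormedSpace 𝕜 F]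
    [IsScalarTower ℝ 𝕜 F] {a : V → 𝕜} (ha : VanishesToOrder M a x)
    (hf : VanishesToOrder N f x) : VanishesToOrder (M + N) (fun p => a p • f p) x := by
  refine ⟨ha.contDiff.smul hf.contDiff, fun m hm => norm_le_zero_iff.1 ?_⟩
  refine (norm_iteratedFDeriv_smul_le ha.contDiff hf.contDiff x (mod_cast le_top)).trans_eq
    (Finset.sum_eq_zero fun i hi_mem => ?_)
  have him := Finset.mem_range.1 hi_mem
  rcases lt_or_ge i M with hi | hi
  · simp [ha.iteratedFDeriv_eq_zero i hi]
  · rw [hf.iteratedFDeriv_eq_zero (m - i) (by omega), norm_zero, mul_zero]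

end VanishesToOrder

lemma iteratedFDeriv_fderiv_apply {f : V → F} (hf : ContDiff ℝ ∞ f) (m : ℕ) (v x : V)
    (w : Fin m → V) :
    iteratedFDeriv ℝ m (fun p => fderiv ℝ f p v) x w
      = iteratedFDeriv ℝ (m + 1) f x (Fin.snoc w v) := by
  have hdf : ContDiff ℝ ∞ (fderiv ℝ f) := hf.fderiv_right le_rfl
  have h := (ContinuousLinearMap.apply ℝ F v).iteratedFDeriv_comp_left
    (hdf.contDiffAt (x := x)) (i := m) (mod_cast le_top)
  simpa [iteratedFDeriv_succ_apply_right, Fin.init_snoc, Function.comp_def]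
    using DFunLike.congr_fun h w

lemma vanishesToOrder_succ_iff {N : ℕ} {f : V → F} {x : V} :
    VanishesToOrder (N + 1) f x ↔ ContDiff ℝ ∞ f ∧ f x = 0 ∧
      ∀ v, VanishesToOrder N (fun p => fderiv ℝ f p v) x := by
  refine ⟨fun h => ⟨h.contDiff, h.eq_zero, fun v =>
      ⟨contDiff_fderiv_apply h.contDiff v, fun m hm => ?_⟩⟩,
    fun ⟨hf, hx, hd⟩ => ⟨hf, fun m hm => ?_⟩⟩
  · ext w
    simp [iteratedFDeriv_fderiv_apply h.contDiff, h.iteratedFDeriv_eq_zero (m + 1) (by omega)]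
  · ext w
    cases m with
    | zero => simpa using hx
    | succ m =>
      rw [← Fin.snoc_init_self w, ← iteratedFDeriv_fderiv_apply hf,
        (hd _).iteratedFDeriv_eq_zero m (by omega)]
      rfl

lemma VanishesToOrder.fderiv_apply {N : ℕ} {f : V → F} {x : V}
    (hf : VanishesToOrder (N + 1) f x) (v : V) : VanishesToOrder N (fun p => fderiv ℝ f p v) x :=
  (vanishesToOrder_succ_iff.1 hf).2.2 v

end VanishingOrder

section Taylor

variable {V F : Type*} [NormedAddCommGroup V] [NormedSpace ℝ V] [NormedAddCommGroup F]
  [NormedSpace ℝ F]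

lemma eq_zero_of_pow_smul_isLittleO {m : ℕ} {c : F}
    (h : (fun t : ℝ => t ^ m • c) =o[nhds 0] fun t : ℝ => t ^ m) : c = 0 := by
  have hlim := (h.mono (nhdsWithin_le_nhds (s := {0}ᶜ))).tendsto_inv_smul_nhds_zero
  refine tendsto_nhds_unique (tendsto_const_nhds.congr' ?_) hlim
  filter_upwards [self_mem_nhdsWithin] with t ht
  rw [inv_smul_smul₀ (pow_ne_zero m ht)]

lemma iteratedDeriv_eq_zero_of_isBigO {g : ℝ → F} (hg : ContDiff ℝ ∞ g) {N m : ℕ}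
    (hO : g =O[nhds 0] fun t : ℝ => t ^ N) (hm : m < N) : iteratedDeriv m g 0 = 0 := by
  induction m using Nat.strong_induction_on with
  | _ m ih =>
    have htaylor := taylor_isLittleO_univ (x₀ := 0) (contDiff_infty.1 hg m)
    simp only [taylor_within_apply, iteratedDerivWithin_univ, sub_zero] at htaylor
    have hsum : ∀ t : ℝ, ∑ k ∈ Finset.range (m + 1), ((k.factorial : ℝ)⁻¹ * t ^ k) •
        iteratedDeriv k g 0 = t ^ m • ((m.factorial : ℝ)⁻¹ • iteratedDeriv m g 0) := fun t => by
      rw [Finset.sum_range_succ, Finset.sum_eq_zero fun k hk => by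
        rw [ih k (Finset.mem_range.1 hk) ((Finset.mem_range.1 hk).trans hm), smul_zero],
        zero_add, mul_comm, mul_smul]
    simp only [hsum] at htaylor
    have hg_small : g =o[nhds 0] fun t : ℝ => t ^ m :=
      hO.trans_isLittleO (isLittleO_pow_pow hm)
    have hcoeff := eq_zero_of_pow_smul_isLittleO <| (hg_small.sub htaylor).congr_left
      fun t => sub_sub_cancel (g t) _
    exact (smul_eq_zero.1 hcoeff).resolve_left (inv_ne_zero (mod_cast m.factorial_ne_zero))

lemma iteratedDeriv_comp_line {f : V → F} (hf : ContDiff ℝ ∞ f) (x v : V) (m : ℕ) :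
    iteratedDeriv m (fun t : ℝ => f (x + t • v))
      = fun t => iteratedFDeriv ℝ m f (x + t • v) fun _ => v := by
  induction m with
  | zero => ext; simp
  | succ m ih =>
    ext t
    rw [iteratedDeriv_succ, ih,
      ((contDiff_infty.1 hf (m + 1)).contDiffAt).deriv_fderiv_add_smul]

lemma iteratedFDeriv_diag_eq_zero_of_isBigO {f : V → F} (hf : ContDiff ℝ ∞ f) {N m : ℕ} {x : V}
    (hO : f =O[nhds x] fun y => ‖y - x‖ ^ N) (hm : m < N) (v : V) :
    (iteratedFDeriv ℝ m f x fun _ => v) = 0 := by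
  have hline : Filter.Tendsto (fun t : ℝ => x + t • v) (nhds 0) (nhds x) :=
    Continuous.tendsto' (by fun_prop) _ _ (by simp)
  have hg : ContDiff ℝ ∞ fun t : ℝ => f (x + t • v) := hf.comp (by fun_prop)
  have hgO : (fun t : ℝ => f (x + t • v)) =O[nhds 0] fun t : ℝ => t ^ N := by
    refine (hO.comp_tendsto hline).trans (IsBigO.of_bound (‖v‖ ^ N) (.of_forall fun t => ?_))
    simp [norm_smul, mul_pow, mul_comm]
  simpa [iteratedDeriv_comp_line hf] using iteratedDeriv_eq_zero_of_isBigO hg hgO hm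

lemma fderiv_fderiv_apply_comm {f : V → F} (hf : ContDiff ℝ ∞ f) (v w p : V) :
    fderiv ℝ (fun q => fderiv ℝ f q v) p w = fderiv ℝ (fun q => fderiv ℝ f q w) p v := by
  have hd : DifferentiableAt ℝ (fderiv ℝ f) p :=
    (hf.fderiv_right (m := ∞) le_rfl).differentiable (by simp) p
  have hsymm : IsSymmSndFDerivAt ℝ f p := hf.contDiffAt.isSymmSndFDerivAt <| by
    simp only [minSmoothness_of_isRCLikeNormedField]
    exact WithTop.coe_le_coe.2 le_top
  simpa [fderiv_clm_apply hd (differentiableAt_const _)] using hsymm w v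

lemma iteratedFDeriv_succ_diag {f : V → F} (hf : ContDiff ℝ ∞ f) (m : ℕ) (x v : V) :
    (iteratedFDeriv ℝ (m + 1) f x fun _ => v)
      = iteratedFDeriv ℝ m (fun p => fderiv ℝ f p v) x fun _ => v := by
  rw [iteratedFDeriv_fderiv_apply hf]
  congr 1
  ext i
  exact Fin.lastCases (by simp) (by simp) i

lemma iteratedFDeriv_succ_diag_add_smul {f : V → F} (hf : ContDiff ℝ ∞ f) (m : ℕ) (x v w : V)
    (s : ℝ) :
    (iteratedFDeriv ℝ (m + 1) f x fun _ => v + s • w)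
      = (iteratedFDeriv ℝ m (fun p => fderiv ℝ f p v) x fun _ => v + s • w)
        + s • iteratedFDeriv ℝ m (fun p => fderiv ℝ f p w) x fun _ => v + s • w := by
  have hsmooth (u : V) : ContDiffAt ℝ m (fun p => fderiv ℝ f p u) x :=
    (contDiff_infty.1 (contDiff_fderiv_apply hf u) m).contDiffAt
  have hsplit : iteratedFDeriv ℝ m (fun p => fderiv ℝ f p (v + s • w)) x
      = iteratedFDeriv ℝ m (fun p => fderiv ℝ f p v) x
        + s • iteratedFDeriv ℝ m (fun p => fderiv ℝ f p w) x := by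
    simp only [map_add, map_smul]
    rw [← iteratedFDeriv_const_smul_apply' (hsmooth w)]
    exact iteratedFDeriv_add_apply (hsmooth v) ((hsmooth w).const_smul s)
  rw [iteratedFDeriv_succ_diag hf, hsplit]
  rfl

/-- Polarization; the symmetry of the iterated derivative enters only through the commutation
of two derivatives. -/
lemma hasDerivAt_iteratedFDeriv_diag {f : V → F} (hf : ContDiff ℝ ∞ f) (m : ℕ) (x v w : V) :
    HasDerivAt (fun s : ℝ => iteratedFDeriv ℝ (m + 1) f x fun _ => v + s • w)
      ((m + 1 : ℝ) • iteratedFDeriv ℝ m (fun p => fderiv ℝ f p w) x fun _ => v) 0 := by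
  simp only [iteratedFDeriv_succ_diag_add_smul hf]
  induction m generalizing f with
  | zero =>
    simpa using ((hasDerivAt_id (0 : ℝ)).smul_const (fderiv ℝ f x w)).const_add (fderiv ℝ f x v)
  | succ m ih =>
    have hderiv (u : V) := ih (contDiff_fderiv_apply hf u)
    simp only [← iteratedFDeriv_succ_diag_add_smul (contDiff_fderiv_apply hf _)] at hderiv
    refine ((hderiv v).add ((hasDerivAt_id (0 : ℝ)).smul (hderiv w))).congr_deriv ?_
    simp only [fderiv_fderiv_apply_comm hf v w,
      ← iteratedFDeriv_succ_diag (contDiff_fderiv_apply hf w), id, zero_smul, one_smul, zero_add,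
      add_zero, Nat.cast_succ, add_smul]

lemma vanishesToOrder_of_diag_eq_zero {f : V → F} (hf : ContDiff ℝ ∞ f) {N : ℕ} {x : V}
    (h : ∀ m < N, ∀ v, (iteratedFDeriv ℝ m f x fun _ => v) = 0) : VanishesToOrder N f x := by
  induction N generalizing f with
  | zero => exact .of_contDiff hf
  | succ N ih =>
    refine vanishesToOrder_succ_iff.2 ⟨hf, by simpa using h 0 N.succ_pos 0, fun w =>
      ih (contDiff_fderiv_apply hf w) fun m hm v => ?_⟩
    have hderiv := hasDerivAt_iteratedFDeriv_diag hf m x v w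
    simp only [h (m + 1) (by omega)] at hderiv
    have hzero := hderiv.unique (hasDerivAt_const 0 0)
    exact (smul_eq_zero.1 hzero).resolve_left (by positivity)

lemma vanishesToOrder_of_isBigO {f : V → F} (hf : ContDiff ℝ ∞ f) {N : ℕ} {x : V}
    (hO : f =O[nhds x] fun y => ‖y - x‖ ^ N) : VanishesToOrder N f x :=
  vanishesToOrder_of_diag_eq_zero hf fun _ => iteratedFDeriv_diag_eq_zero_of_isBigO hf hO

end Taylor

section ComplexDirections

variable {V F : Type*} [NormedAddCommGroup V] [NormedSpace ℝ V] [NormedAddCommGroup F]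
  [NormedSpace ℂ F]

/-- The complex-linear extension of a real-linear map to the complexification `ℂ ⊗[ℝ] V`. -/
def complexify : (V →L[ℝ] F) →ₗ[ℂ] ℂ ⊗[ℝ] V →ₗ[ℂ] F :=
  (LinearMap.liftBaseChangeEquiv ℂ).toLinearMap ∘ₗ ContinuousLinearMap.coeLM ℂ

@[simp]
lemma complexify_tmul (L : V →L[ℝ] F) (c : ℂ) (v : V) : complexify L (c ⊗ₜ v) = c • L v :=
  LinearMap.liftBaseChange_tmul ..

/-- The derivative of `f` along the constant complex vector field `X`, for instance along a
Wirtinger field `∂/∂z_j`. -/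
def dirDeriv (X : ℂ ⊗[ℝ] V) (f : V → F) (p : V) : F :=
  complexify (fderiv ℝ f p) X

lemma dirDeriv_tmul (c : ℂ) (v : V) (f : V → F) :
    dirDeriv (c ⊗ₜ v) f = fun p => c • fderiv ℝ f p v :=
  funext fun _ => complexify_tmul ..

lemma dirDeriv_zero_left (f : V → F) : dirDeriv 0 f = 0 :=
  funext fun _ => map_zero _

lemma dirDeriv_add_left (X Y : ℂ ⊗[ℝ] V) (f : V → F) :
    dirDeriv (X + Y) f = dirDeriv X f + dirDeriv Y f :=
  funext fun _ => map_add ..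

lemma dirDeriv_smul_left (c : ℂ) (X : ℂ ⊗[ℝ] V) (f : V → F) :
    dirDeriv (c • X) f = c • dirDeriv X f :=
  funext fun _ => map_smul ..

lemma dirDeriv_clm (L : V →L[ℝ] F) (X : ℂ ⊗[ℝ] V) :
    dirDeriv X L = fun _ => complexify L X := by
  ext p
  rw [dirDeriv, L.fderiv]

lemma contDiff_dirDeriv {f : V → F} (hf : ContDiff ℝ ∞ f) (X : ℂ ⊗[ℝ] V) :
    ContDiff ℝ ∞ (dirDeriv X f) := by
  induction X using TensorProduct.induction_on with
  | zero => rw [dirDeriv_zero_left]; exact contDiff_const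
  | tmul c v => rw [dirDeriv_tmul]; exact (contDiff_fderiv_apply hf v).const_smul c
  | add X Y hX hY => rw [dirDeriv_add_left]; exact hX.add hY

lemma dirDeriv_add {f g : V → F} (hf : Differentiable ℝ f) (hg : Differentiable ℝ g)
    (X : ℂ ⊗[ℝ] V) : dirDeriv X (f + g) = dirDeriv X f + dirDeriv X g := by
  ext p
  simp [dirDeriv, fderiv_add (hf p) (hg p)]

lemma dirDeriv_sub {f g : V → F} (hf : Differentiable ℝ f) (hg : Differentiable ℝ g)
    (X : ℂ ⊗[ℝ] V) : dirDeriv X (f - g) = dirDeriv X f - dirDeriv X g := by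
  ext p
  simp [dirDeriv, fderiv_sub (hf p) (hg p)]

lemma dirDeriv_sum {ι : Type*} (s : Finset ι) {f : ι → V → F} (hf : ∀ i, Differentiable ℝ (f i))
    (X : ℂ ⊗[ℝ] V) : dirDeriv X (∑ i ∈ s, f i) = ∑ i ∈ s, dirDeriv X (f i) := by
  ext p
  simp [dirDeriv, fderiv_sum fun i _ => hf i p]

lemma dirDeriv_const_smul {f : V → F} (hf : Differentiable ℝ f) (c : ℂ) (X : ℂ ⊗[ℝ] V) :
    dirDeriv X (c • f) = c • dirDeriv X f := by
  ext p
  simp [dirDeriv, fderiv_const_smul (hf p)]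

lemma dirDeriv_smul {a : V → ℂ} {f : V → F} (ha : Differentiable ℝ a)
    (hf : Differentiable ℝ f) (X : ℂ ⊗[ℝ] V) :
    dirDeriv X (a • f) = a • dirDeriv X f + dirDeriv X a • f := by
  ext p
  simp only [dirDeriv, fderiv_smul (ha p) (hf p), Pi.add_apply, Pi.smul_apply', map_add, map_smul,
    LinearMap.add_apply, LinearMap.smul_apply, add_right_inj]
  induction X using TensorProduct.induction_on with
  | zero => simp
  | tmul c v => simp [smul_smul]
  | add X Y hX hY => simp only [map_add, hX, hY, add_smul]

lemma dirDeriv_comm {f : V → F} (hf : ContDiff ℝ ∞ f) (X Y : ℂ ⊗[ℝ] V) :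
    dirDeriv X (dirDeriv Y f) = dirDeriv Y (dirDeriv X f) := by
  have hdiff (Z : ℂ ⊗[ℝ] V) := (contDiff_dirDeriv hf Z).differentiable (by simp)
  have hzero (Z : ℂ ⊗[ℝ] V) : dirDeriv Z (0 : V → F) = 0 := by
    simpa using dirDeriv_const_smul (hf.differentiable (by simp)) 0 Z
  induction X using TensorProduct.induction_on with
  | zero => simp only [dirDeriv_zero_left, hzero]
  | add X X' hX hX' =>
    simp only [dirDeriv_add_left, dirDeriv_add (hdiff X) (hdiff X'), hX, hX']
  | tmul c v =>
    induction Y using TensorProduct.induction_on with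
    | zero => simp only [dirDeriv_zero_left, hzero]
    | add Y Y' hY hY' =>
      simp only [dirDeriv_add_left, dirDeriv_add (hdiff Y) (hdiff Y'), hY, hY']
    | tmul d w =>
      ext p
      have hd (u : V) := (contDiff_fderiv_apply hf u).differentiable (by simp) p
      simp only [dirDeriv_tmul, fderiv_fun_const_smul (hd _), smul_apply,
        fderiv_fderiv_apply_comm hf v w, smul_comm c d]

lemma VanishesToOrder.dirDeriv {N : ℕ} {f : V → F} {x : V} (hf : VanishesToOrder (N + 1) f x)
    (X : ℂ ⊗[ℝ] V) : VanishesToOrder N (dirDeriv X f) x := by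
  induction X using TensorProduct.induction_on with
  | zero => rw [dirDeriv_zero_left]; exact .zero
  | tmul c v =>
    rw [dirDeriv_tmul]
    exact (hf.fderiv_apply v).const_smul c
  | add X Y hX hY => rw [dirDeriv_add_left]; exact hX.add hY

lemma vanishesToOrder_succ_iff_dirDeriv {N : ℕ} {f : V → F} {x : V} :
    VanishesToOrder (N + 1) f x ↔ ContDiff ℝ ∞ f ∧ f x = 0 ∧
      ∀ X, VanishesToOrder N (_root_.dirDeriv X f) x := by
  refine ⟨fun h => ⟨h.contDiff, h.eq_zero, h.dirDeriv⟩, fun ⟨hf, hx, hd⟩ =>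
    vanishesToOrder_succ_iff.2 ⟨hf, hx, fun v => ?_⟩⟩
  simpa only [dirDeriv_tmul, one_smul] using hd (1 ⊗ₜ v)

end ComplexDirections

section EulerOperator

variable {ι V F : Type*} [Fintype ι] [NormedAddCommGroup V] [NormedSpace ℝ V]
  [NormedAddCommGroup F] [NormedSpace ℂ F]

/-- The first-order operator `s + ∑ j, c j * a j * D_{X j}`, a weighted Euler operator when the
linear functions `a` are dual to the constant complex vector fields `X`. -/
def eulerOp (a : ι → V →L[ℝ] ℂ) (X : ι → ℂ ⊗[ℝ] V) (c : ι → ℂ) (s : ℂ) (u : V → F) : V → F :=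
  s • u + ∑ j, c j • (⇑(a j) • dirDeriv (X j) u)

variable {a : ι → V →L[ℝ] ℂ} {X : ι → ℂ ⊗[ℝ] V} {c : ι → ℂ} {s : ℂ} {u : V → F} {N : ℕ}

lemma dirDeriv_eulerOp (hu : ContDiff ℝ ∞ u) (Y : ℂ ⊗[ℝ] V) :
    dirDeriv Y (eulerOp a X c s u) = eulerOp a X c s (dirDeriv Y u)
      + ∑ j, (c j * complexify (a j) Y) • dirDeriv (X j) u := by
  have hu_diff : Differentiable ℝ u := hu.differentiable (by simp)
  have hXu (j : ι) : Differentiable ℝ (dirDeriv (X j) u) :=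
    (contDiff_dirDeriv hu (X j)).differentiable (by simp)
  have hterm (j : ι) : Differentiable ℝ (⇑(a j) • dirDeriv (X j) u) :=
    (a j).differentiable.smul (hXu j)
  have hterm' (j : ι) : Differentiable ℝ (c j • (⇑(a j) • dirDeriv (X j) u)) :=
    (hterm j).const_smul _
  have hsum : Differentiable ℝ (∑ j, c j • (⇑(a j) • dirDeriv (X j) u)) :=
    Differentiable.sum fun j _ => hterm' j
  rw [eulerOp, dirDeriv_add (hu_diff.const_smul s) hsum, dirDeriv_const_smul hu_diff,
    dirDeriv_sum _ hterm', eulerOp, add_assoc, ← Finset.sum_add_distrib]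
  congr 1
  refine Finset.sum_congr rfl fun j _ => ?_
  rw [dirDeriv_const_smul (hterm j), dirDeriv_smul (a j).differentiable (hXu j), dirDeriv_comm hu,
    dirDeriv_clm, smul_add, mul_smul]
  rfl

variable [DecidableEq ι]

lemma dirDeriv_eulerOp_of_dual (hdual : ∀ j k, complexify (a k) (X j) = if j = k then 1 else 0)
    (hu : ContDiff ℝ ∞ u) (k : ι) :
    dirDeriv (X k) (eulerOp a X c s u) = eulerOp a X c (s + c k) (dirDeriv (X k) u) := by
  rw [dirDeriv_eulerOp hu]
  simp only [hdual, mul_ite, mul_one, mul_zero, ite_smul, zero_smul, Finset.sum_ite_eq,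
    Finset.mem_univ, if_true, eulerOp, add_smul]
  abel

lemma vanishesToOrder_of_eulerOp (hdual : ∀ j k, complexify (a k) (X j) = if j = k then 1 else 0)
    (hc : ∀ j, 0 < (c j).re) (hs : 0 < s.re) (hu : ContDiff ℝ ∞ u)
    (h : VanishesToOrder N (eulerOp a X c s u) 0) : VanishesToOrder N u 0 := by
  induction N generalizing s u with
  | zero => exact .of_contDiff hu
  | succ N ih =>
    have hXu (k : ι) : VanishesToOrder N (dirDeriv (X k) u) 0 := by
      refine ih (s := s + c k) (by simpa using add_pos hs (hc k)) (contDiff_dirDeriv hu _) ?_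
      simpa only [dirDeriv_eulerOp_of_dual hdual hu] using h.dirDeriv (X k)
    have hs0 : s ≠ 0 := fun hs0 => by simp [hs0] at hs
    refine vanishesToOrder_succ_iff_dirDeriv.2 ⟨hu, ?_, fun Y => ih hs (contDiff_dirDeriv hu Y) ?_⟩
    · simpa [eulerOp, hs0] using h.eq_zero
    · rw [eq_sub_of_add_eq (dirDeriv_eulerOp hu Y).symm]
      exact (h.dirDeriv Y).sub <|
        .sum _ fun j _ => (hXu j).const_smul _

lemma vanishesToOrder_dirDeriv_of_eulerOp
    (hdual : ∀ j k, complexify (a k) (X j) = if j = k then 1 else 0) (hc : ∀ j, 0 < (c j).re)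
    (hu : ContDiff ℝ ∞ u) (h : VanishesToOrder (N + 1) (eulerOp a X c 0 u) 0) (k : ι) :
    VanishesToOrder N (dirDeriv (X k) u) 0 := by
  refine vanishesToOrder_of_eulerOp hdual hc (hc k) (contDiff_dirDeriv hu _) ?_
  simpa only [dirDeriv_eulerOp_of_dual hdual hu, zero_add] using h.dirDeriv (X k)

end EulerOperator

section ZeroOnSubspace

variable {V F : Type*} [NormedAddCommGroup V] [NormedSpace ℝ V] [NormedAddCommGroup F]
  [NormedSpace ℂ F] {W : Submodule ℝ V} {u : V → F}

lemma dirDeriv_eq_zero_of_eqOn (hu : Differentiable ℝ u) (hW : ∀ p ∈ W, u p = 0) {w : V}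
    (hw : w ∈ W) : ∀ p ∈ W, dirDeriv (1 ⊗ₜ w) u p = 0 := by
  intro p hp
  have hline := (hu p).lineDeriv_eq_fderiv (v := w)
  have hconst (t : ℝ) : u (p + t • w) = 0 := hW _ (W.add_mem hp (W.smul_mem t hw))
  simp [dirDeriv_tmul, ← hline, lineDeriv, hconst]

/-- A derivative of `u` along the subspace is again a function vanishing on the subspace, which
makes the induction on the order run. -/
lemma vanishesToOrder_succ_of_eqOn_submodule {S : Set (ℂ ⊗[ℝ] V)} {N : ℕ}
    (hspan : Submodule.span ℂ (S ∪ (fun w => 1 ⊗ₜ w) '' (W : Set V)) = ⊤)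
    (hu : ContDiff ℝ ∞ u) (hW : ∀ p ∈ W, u p = 0)
    (hS : ∀ X ∈ S, VanishesToOrder N (dirDeriv X u) 0) : VanishesToOrder (N + 1) u 0 := by
  induction N generalizing u with
  | zero =>
    exact vanishesToOrder_succ_iff.2 ⟨hu, hW 0 W.zero_mem, fun v =>
      .of_contDiff (contDiff_fderiv_apply hu v)⟩
  | succ N ih =>
    refine vanishesToOrder_succ_iff_dirDeriv.2 ⟨hu, hW 0 W.zero_mem, fun X => ?_⟩
    have hX : X ∈ Submodule.span ℂ (S ∪ (fun w => 1 ⊗ₜ w) '' (W : Set V)) :=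
      hspan ▸ Submodule.mem_top
    induction hX using Submodule.span_induction with
    | mem X hX =>
      rcases hX with hX | ⟨w, hw, rfl⟩
      · exact hS X hX
      · refine ih (contDiff_dirDeriv hu _)
          (dirDeriv_eq_zero_of_eqOn (hu.differentiable (by simp)) hW hw) fun Y hY => ?_
        rw [dirDeriv_comm hu]
        exact (hS Y hY).dirDeriv _
    | zero => rw [dirDeriv_zero_left]; exact .zero
    | add X Y _ _ hX hY => rw [dirDeriv_add_left]; exact hX.add hY
    | smul c X _ hX => rw [dirDeriv_smul_left]; exact hX.const_smul c

end ZeroOnSubspace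

section Wirtinger

variable {E F : Type*} [NormedAddCommGroup E] [NormedSpace ℂ E] [NormedAddCommGroup F]
  [NormedSpace ℂ F]

/-- The holomorphic Wirtinger vector `(v - i J v) / 2` of `v`, where `J` is multiplication by `i`
in `E`; differentiation along it is `∂/∂z_j` when `v` is the `j`-th coordinate vector. -/
def holVec (v : E) : ℂ ⊗[ℝ] E :=
  (1 / 2 : ℂ) ⊗ₜ v - (I / 2) ⊗ₜ (I • v)

/-- The antiholomorphic Wirtinger vector `(v + i J v) / 2` of `v`, where `J` is multiplication by
`i` in `E`; differentiation along it is `∂/∂z̄_j` when `v` is the `j`-th coordinate vector. -/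
def antiholVec (v : E) : ℂ ⊗[ℝ] E :=
  (1 / 2 : ℂ) ⊗ₜ v + (I / 2) ⊗ₜ (I • v)

lemma holVec_add (v w : E) : holVec (v + w) = holVec v + holVec w := by
  simp only [holVec, smul_add, TensorProduct.tmul_add]
  abel

lemma antiholVec_add (v w : E) : antiholVec (v + w) = antiholVec v + antiholVec w := by
  simp only [antiholVec, smul_add, TensorProduct.tmul_add]
  abel

lemma one_tmul_eq_holVec_add_antiholVec (v : E) : 1 ⊗ₜ v = holVec v + antiholVec v := by
  rw [holVec, antiholVec, sub_add_add_cancel, ← TensorProduct.add_tmul, add_halves]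

lemma one_tmul_I_smul_eq (v : E) : 1 ⊗ₜ (I • v) = I • (holVec v - antiholVec v) := by
  have hI : I * (I / 2) = -(1 / 2) := by linear_combination I_mul_I / 2
  have htwo : (1 : ℂ) ⊗ₜ[ℝ] (I • v) = (1 / 2 : ℂ) ⊗ₜ (I • v) + (1 / 2 : ℂ) ⊗ₜ (I • v) := by
    rw [← TensorProduct.add_tmul, add_halves]
  simp only [holVec, antiholVec, smul_sub, smul_add, TensorProduct.smul_tmul', smul_eq_mul, hI,
    TensorProduct.neg_tmul, htwo]
  abel

lemma one_tmul_smul (c : ℂ) (v : E) :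
    (1 : ℂ) ⊗ₜ[ℝ] (c • v) = c.re • (1 ⊗ₜ v) + c.im • (1 ⊗ₜ (I • v)) := by
  nth_rw 1 [← re_add_im c]
  simp only [add_smul, mul_smul, coe_smul, TensorProduct.tmul_add, TensorProduct.tmul_smul]

lemma eq_top_of_holVec_mem_of_antiholVec_mem {P : Submodule ℂ (ℂ ⊗[ℝ] E)} {B : Set E}
    (hB : Submodule.span ℂ B = ⊤) (hhol : ∀ v ∈ B, holVec v ∈ P)
    (hanti : ∀ v ∈ B, antiholVec v ∈ P) : P = ⊤ := by
  have hone (v : E) : (1 : ℂ) ⊗ₜ[ℝ] v ∈ P ∧ (1 : ℂ) ⊗ₜ[ℝ] (I • v) ∈ P := by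
    have hv : v ∈ Submodule.span ℂ B := hB ▸ Submodule.mem_top
    induction hv using Submodule.span_induction with
    | mem v hv =>
      rw [one_tmul_eq_holVec_add_antiholVec, one_tmul_I_smul_eq]
      exact ⟨P.add_mem (hhol v hv) (hanti v hv),
        P.smul_mem I (P.sub_mem (hhol v hv) (hanti v hv))⟩
    | zero => simp
    | add v w _ _ hv hw =>
      simpa only [smul_add, TensorProduct.tmul_add] using
        ⟨P.add_mem hv.1 hw.1, P.add_mem hv.2 hw.2⟩
    | smul c v _ hv =>
      rw [smul_smul, one_tmul_smul c, one_tmul_smul (I * c)]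
      exact ⟨P.add_mem (P.smul_of_tower_mem _ hv.1) (P.smul_of_tower_mem _ hv.2),
        P.add_mem (P.smul_of_tower_mem _ hv.1) (P.smul_of_tower_mem _ hv.2)⟩
  refine Submodule.eq_top_iff'.2 fun X => ?_
  induction X using TensorProduct.induction_on with
  | zero => exact P.zero_mem
  | tmul c v => simpa [TensorProduct.smul_tmul'] using P.smul_mem c (hone v).1
  | add X Y hX hY => exact P.add_mem hX hY

lemma complexify_holVec (L : E →L[ℝ] F) (v : E) :
    complexify L (holVec v) = (1 / 2 : ℂ) • (L v - I • L (I • v)) := by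
  simp only [holVec, map_sub, complexify_tmul, smul_sub, smul_smul, one_div_mul_eq_div]

lemma complexify_antiholVec (L : E →L[ℝ] F) (v : E) :
    complexify L (antiholVec v) = (1 / 2 : ℂ) • (L v + I • L (I • v)) := by
  simp only [antiholVec, map_add, complexify_tmul, smul_add, smul_smul, one_div_mul_eq_div]

lemma complexify_holVec_of_complexLinear (L : E →L[ℂ] F) (v : E) :
    complexify (L.restrictScalars ℝ) (holVec v) = L v := by
  rw [complexify_holVec]
  simp [smul_smul, ← two_smul ℂ (L v)]

lemma complexify_antiholVec_of_complexLinear (L : E →L[ℂ] F) (v : E) :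
    complexify (L.restrictScalars ℝ) (antiholVec v) = 0 := by
  rw [complexify_antiholVec]
  simp [smul_smul]

lemma complexify_holVec_conj (L : E →L[ℝ] ℂ) (v : E) :
    complexify (conjCLE.toContinuousLinearMap ∘L L) (holVec v)
      = (starRingEnd ℂ) (complexify L (antiholVec v)) := by
  rw [complexify_holVec, complexify_antiholVec]
  simp [sub_eq_add_neg, conj_ofNat]

lemma complexify_antiholVec_conj (L : E →L[ℝ] ℂ) (v : E) :
    complexify (conjCLE.toContinuousLinearMap ∘L L) (antiholVec v)
      = (starRingEnd ℂ) (complexify L (holVec v)) := by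
  rw [complexify_holVec, complexify_antiholVec]
  simp [sub_eq_add_neg, conj_ofNat]

lemma fderiv_conj_comp (f : E → ℂ) (p : E) :
    fderiv ℝ (fun q => (starRingEnd ℂ) (f q)) p = conjCLE.toContinuousLinearMap ∘L fderiv ℝ f p :=
  conjCLE.comp_fderiv

lemma dirDeriv_holVec_conj (f : E → ℂ) (v p : E) :
    dirDeriv (holVec v) (fun q => (starRingEnd ℂ) (f q)) p
      = (starRingEnd ℂ) (dirDeriv (antiholVec v) f p) := by
  rw [dirDeriv, fderiv_conj_comp, complexify_holVec_conj, dirDeriv]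

lemma dirDeriv_antiholVec_conj (f : E → ℂ) (v p : E) :
    dirDeriv (antiholVec v) (fun q => (starRingEnd ℂ) (f q)) p
      = (starRingEnd ℂ) (dirDeriv (holVec v) f p) := by
  rw [dirDeriv, fderiv_conj_comp, complexify_antiholVec_conj, dirDeriv]

/-- The conjugate of a complex-linear function `L` times a complex-linear map `M`: the building
block of real quadratic functions whose Wirtinger derivatives are immediate. -/
def conjSMul (L : E →L[ℂ] ℂ) (M : E →L[ℂ] F) (p : E) : F :=
  (starRingEnd ℂ) (L p) • M p

lemma contDiff_conjSMul (L : E →L[ℂ] ℂ) (M : E →L[ℂ] F) : ContDiff ℝ ∞ (conjSMul L M) :=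
  (conjCLE.contDiff.comp (L.restrictScalars ℝ).contDiff).smul (M.restrictScalars ℝ).contDiff

lemma dirDeriv_antiholVec_conjSMul (L : E →L[ℂ] ℂ) (M : E →L[ℂ] F) (v : E) :
    dirDeriv (antiholVec v) (conjSMul L M) = (starRingEnd ℂ) (L v) • ⇑M := by
  let Lbar : E →L[ℝ] ℂ := conjCLE.toContinuousLinearMap ∘L L.restrictScalars ℝ
  have hleibniz := dirDeriv_smul Lbar.differentiable (M.restrictScalars ℝ).differentiable
    (antiholVec v)
  rw [dirDeriv_clm, dirDeriv_clm, complexify_antiholVec_of_complexLinear,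
    complexify_antiholVec_conj, complexify_holVec_of_complexLinear] at hleibniz
  refine hleibniz.trans (funext fun p => ?_)
  simp

variable {E' : Type*} [NormedAddCommGroup E'] [NormedSpace ℂ E']

lemma dirDeriv_holVec_comp {f : E' → F} (hf : Differentiable ℝ f) (L : E →L[ℂ] E') (v p : E) :
    dirDeriv (holVec v) (fun q => f (L q)) p = dirDeriv (holVec (L v)) f (L p) := by
  have hchain : fderiv ℝ (fun q => f (L q)) p = fderiv ℝ f (L p) ∘L L.restrictScalars ℝ :=
    ((hf (L p)).hasFDerivAt.comp p (L.restrictScalars ℝ).hasFDerivAt).fderiv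
  rw [dirDeriv, dirDeriv, hchain, complexify_holVec, complexify_holVec]
  simp

lemma dirDeriv_antiholVec_comp {f : E' → F} (hf : Differentiable ℝ f) (L : E →L[ℂ] E') (v p : E) :
    dirDeriv (antiholVec v) (fun q => f (L q)) p = dirDeriv (antiholVec (L v)) f (L p) := by
  have hchain : fderiv ℝ (fun q => f (L q)) p = fderiv ℝ f (L p) ∘L L.restrictScalars ℝ :=
    ((hf (L p)).hasFDerivAt.comp p (L.restrictScalars ℝ).hasFDerivAt).fderiv
  rw [dirDeriv, dirDeriv, hchain, complexify_antiholVec, complexify_antiholVec]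
  simp

end Wirtinger

section Coordinates

variable {n : ℕ}

/-- The coordinate vector of `z_j` in the space of pairs `(z, w)`. -/
def zVec (j : Fin n) : Cn n × Cn n :=
  (Pi.single j 1, 0)

/-- The coordinate vector of `w_j` in the space of pairs `(z, w)`. -/
def wVec (j : Fin n) : Cn n × Cn n :=
  (0, Pi.single j 1)

lemma span_zVec_wVec : Submodule.span ℂ (Set.range (zVec (n := n)) ∪ Set.range wVec) = ⊤ := by
  rw [eq_top_iff, ← ((Pi.basisFun ℂ (Fin n)).prod (Pi.basisFun ℂ (Fin n))).span_eq, Sum.range_eq]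
  refine Submodule.span_mono (Set.union_subset_union ?_ ?_) <;> rintro _ ⟨j, rfl⟩ <;>
    exact ⟨j, by simp [zVec, wVec]⟩

lemma fderiv_slice {Ψ : Cn n × Cn n → ℂ} (hΨ : Differentiable ℝ Ψ) (p : Cn n × Cn n) (v : Cn n) :
    fderiv ℝ (fun x => Ψ (x, p.2)) p.1 v = fderiv ℝ Ψ p (v, 0) := by
  have hslice : HasFDerivAt (fun x => (x, p.2)) (.inl ℝ (Cn n) (Cn n)) p.1 :=
    hasFDerivAt_prodMk_left p.1 p.2
  exact DFunLike.congr_fun ((hΨ p).hasFDerivAt.comp p.1 hslice).fderiv v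

lemma wdb_eq_dirDeriv {Ψ : Cn n × Cn n → ℂ} (hΨ : Differentiable ℝ Ψ) (j : Fin n)
    (p : Cn n × Cn n) :
    wdb j (fun x => Ψ (x, p.2)) p.1 = dirDeriv (antiholVec (zVec j)) Ψ p := by
  simp [wdb, fderiv_slice hΨ, dirDeriv, complexify_antiholVec, zVec, ← Pi.single_smul']

lemma wd_eq_dirDeriv {Ψ : Cn n × Cn n → ℂ} (hΨ : Differentiable ℝ Ψ) (j : Fin n)
    (p : Cn n × Cn n) :
    wd j (fun x => Ψ (x, p.2)) p.1 = dirDeriv (holVec (zVec j)) Ψ p := by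
  simp [wd, fderiv_slice hΨ, dirDeriv, complexify_holVec, zVec, ← Pi.single_smul']

/-- The complex-linear function `z_j - w_j` of the pair `(z, w)`. -/
def diffCoord (j : Fin n) : Cn n × Cn n →L[ℂ] ℂ :=
  (ContinuousLinearMap.proj j : Cn n →L[ℂ] ℂ) ∘L
    (ContinuousLinearMap.fst ℂ (Cn n) (Cn n) - ContinuousLinearMap.snd ℂ (Cn n) (Cn n))

lemma diffCoord_apply (j : Fin n) (p : Cn n × Cn n) : diffCoord j p = p.1 j - p.2 j :=
  rfl

lemma diffCoord_zVec (j k : Fin n) : diffCoord k (zVec j) = if j = k then 1 else 0 := by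
  simp [diffCoord_apply, zVec, Pi.single_apply, eq_comm]

/-- The complex-linear function `w_j` of the pair `(z, w)`. -/
def sndCoord (j : Fin n) : Cn n × Cn n →L[ℂ] ℂ :=
  (ContinuousLinearMap.proj j : Cn n →L[ℂ] ℂ) ∘L ContinuousLinearMap.snd ℂ (Cn n) (Cn n)

lemma sndCoord_apply (j : Fin n) (p : Cn n × Cn n) : sndCoord j p = p.2 j :=
  rfl

variable (lam : Fin n → ℝ)

/-- The complex vector field along which the linearized eikonal equation transports in the
`j`-th coordinate: `∂/∂z̄_j` if `λ_j > 0` and `∂/∂z_j` otherwise. -/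
def transportVec (j : Fin n) : ℂ ⊗[ℝ] (Cn n × Cn n) :=
  if 0 < lam j then antiholVec (zVec j) else holVec (zVec j)

/-- The image of `transportVec` under `(z, w) ↦ (w, z)` followed by complex conjugation. -/
def reflectedVec (j : Fin n) : ℂ ⊗[ℝ] (Cn n × Cn n) :=
  if 0 < lam j then holVec (wVec j) else antiholVec (wVec j)

/-- The coefficient of `transportVec` in the linearized eikonal equation: the conjugate of
`z_j - w_j` if `λ_j > 0` and `z_j - w_j` otherwise. -/
def transportCoord (j : Fin n) : Cn n × Cn n →L[ℝ] ℂ :=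
  if 0 < lam j then conjCLE.toContinuousLinearMap ∘L (diffCoord j).restrictScalars ℝ
  else (diffCoord j).restrictScalars ℝ

lemma transportCoord_dual (j k : Fin n) :
    complexify (transportCoord lam k) (transportVec lam j) = if j = k then 1 else 0 := by
  rcases eq_or_ne j k with rfl | hjk
  · by_cases hj : 0 < lam j <;>
    simp [transportCoord, transportVec, hj, complexify_antiholVec_conj,
      complexify_holVec_of_complexLinear, diffCoord_zVec]
  · by_cases hj : 0 < lam j <;> by_cases hk : 0 < lam k <;>
    simp [transportCoord, transportVec, hj, hk, hjk, complexify_antiholVec_conj,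
      complexify_holVec_conj, complexify_holVec_of_complexLinear,
      complexify_antiholVec_of_complexLinear, diffCoord_zVec]

/-- The diagonal `z = w`. -/
def diagonal (n : ℕ) : Submodule ℝ (Cn n × Cn n) :=
  LinearMap.eqLocus (LinearMap.fst ℝ _ _) (LinearMap.snd ℝ _ _)

lemma span_transportVec_reflectedVec_diagonal :
    Submodule.span ℂ (Set.range (transportVec lam) ∪ Set.range (reflectedVec lam) ∪
      (fun v => 1 ⊗ₜ v) '' (diagonal n : Set (Cn n × Cn n))) = ⊤ := by
  set P := Submodule.span ℂ (Set.range (transportVec lam) ∪ Set.range (reflectedVec lam) ∪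
      (fun v => 1 ⊗ₜ v) '' (diagonal n : Set (Cn n × Cn n)))
  have htransport (j : Fin n) : transportVec lam j ∈ P := Submodule.subset_span (by simp)
  have hreflected (j : Fin n) : reflectedVec lam j ∈ P := Submodule.subset_span (by simp)
  have hdiag (v : Cn n) (c : ℂ) : c ⊗ₜ (v, v) ∈ P := by
    have hone : (1 : ℂ) ⊗ₜ[ℝ] (v, v) ∈ P := Submodule.subset_span (.inr ⟨(v, v), rfl, rfl⟩)
    simpa [TensorProduct.smul_tmul'] using P.smul_mem c hone
  have hhol (j : Fin n) : holVec (zVec j) + holVec (wVec j) ∈ P := by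
    rw [← holVec_add, holVec, zVec, wVec, Prod.mk_add_mk, zero_add, add_zero]
    exact P.sub_mem (hdiag _ _) (hdiag _ _)
  have hanti (j : Fin n) : antiholVec (zVec j) + antiholVec (wVec j) ∈ P := by
    rw [← antiholVec_add, antiholVec, zVec, wVec, Prod.mk_add_mk, zero_add, add_zero]
    exact P.add_mem (hdiag _ _) (hdiag _ _)
  have hcoord (j : Fin n) : (holVec (zVec j) ∈ P ∧ antiholVec (zVec j) ∈ P) ∧
      (holVec (wVec j) ∈ P ∧ antiholVec (wVec j) ∈ P) := by
    have ht := htransport j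
    have hr := hreflected j
    rw [transportVec] at ht
    rw [reflectedVec] at hr
    split_ifs at ht hr
    · exact ⟨⟨(P.add_mem_iff_left hr).1 (hhol j), ht⟩, hr, (P.add_mem_iff_right ht).1 (hanti j)⟩
    · exact ⟨⟨ht, (P.add_mem_iff_left hr).1 (hanti j)⟩, (P.add_mem_iff_right ht).1 (hhol j), hr⟩
  refine eq_top_of_holVec_mem_of_antiholVec_mem span_zVec_wVec ?_ ?_
  · rintro _ (⟨j, rfl⟩ | ⟨j, rfl⟩)
    exacts [(hcoord j).1.1, (hcoord j).2.1]
  · rintro _ (⟨j, rfl⟩ | ⟨j, rfl⟩)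
    exacts [(hcoord j).1.2, (hcoord j).2.2]

end Coordinates

section Antisymmetry

variable {n N : ℕ} {u : Cn n × Cn n → ℂ}

lemma vanishesToOrder_dirDeriv_reflectedVec (hu : ContDiff ℝ ∞ u)
    (hantisymm : ∀ p, u p = -(starRingEnd ℂ) (u p.swap)) {lam : Fin n → ℝ} {j : Fin n}
    (h : VanishesToOrder N (dirDeriv (transportVec lam j) u) 0) :
    VanishesToOrder N (dirDeriv (reflectedVec lam j) u) 0 := by
  let swapL : Cn n × Cn n →L[ℂ] Cn n × Cn n := ContinuousLinearEquiv.prodComm ℂ (Cn n) (Cn n)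
  have hdiff : Differentiable ℝ u := hu.differentiable (by simp)
  have hconj : u = fun p => (starRingEnd ℂ) ((-u) (swapL p)) :=
    funext fun p => (hantisymm p).trans (map_neg _ _).symm
  have hswap : swapL (wVec j) = zVec j := rfl
  have hreflect : dirDeriv (reflectedVec lam j) u
      = fun p => conjCLE (dirDeriv (transportVec lam j) (-u) (swapL p)) := by
    funext p
    conv_lhs => rw [hconj]
    rw [reflectedVec, transportVec]
    split_ifs
    · rw [dirDeriv_holVec_conj, dirDeriv_antiholVec_comp hdiff.neg, hswap, conjCLE_apply]
    · rw [dirDeriv_antiholVec_conj, dirDeriv_holVec_comp hdiff.neg, hswap, conjCLE_apply]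
  have hneg_dir : VanishesToOrder N (dirDeriv (transportVec lam j) (-u)) (swapL 0) := by
    rw [← neg_one_smul ℂ u, dirDeriv_const_smul hdiff, map_zero]
    exact h.const_smul _
  rw [hreflect]
  exact (hneg_dir.comp_clm (L := swapL.restrictScalars ℝ)).clm_comp
    (conjCLE.toContinuousLinearMap)

end Antisymmetry

section QuadraticPart

variable {n : ℕ} {lam mu : Fin n → ℝ} {φ : Cn n → ℝ} {Ψ : Cn n × Cn n → ℂ}

/-- The quadratic model of an admissible phase at the origin, with free coefficients `mu` in place
of `|lam|`: conjugating an admissible phase replaces `mu` by `-mu`. -/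
def quadraticPhase (lam mu : Fin n → ℝ) (p : Cn n × Cn n) : ℂ :=
  I * ∑ j, ((mu j * normSq (p.1 j - p.2 j) : ℝ) : ℂ)
    + I * ∑ j, (lam j : ℂ) * ((starRingEnd ℂ) (p.1 j) * p.2 j - (starRingEnd ℂ) (p.2 j) * p.1 j)

lemma conj_quadraticPhase (p : Cn n × Cn n) :
    (starRingEnd ℂ) (quadraticPhase lam mu p) = quadraticPhase lam (-mu) p := by
  simp only [quadraticPhase, Finset.mul_sum, ← Finset.sum_add_distrib, map_sum]
  refine Finset.sum_congr rfl fun j _ => ?_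
  simp only [map_add, map_mul, map_sub, conj_I, conj_ofReal, conj_conj, Pi.neg_apply, neg_mul,
    ofReal_neg]
  ring

/-- The antiholomorphic factor `i ∂ψ/∂z̄_j + ∂φ/∂z̄_j` of the eikonal equation. -/
def antiholFactor (φ : Cn n → ℝ) (Ψ : Cn n × Cn n → ℂ) (j : Fin n) : Cn n × Cn n → ℂ :=
  I • dirDeriv (antiholVec (zVec j)) Ψ + dirDeriv (antiholVec (zVec j)) fun p => cplx φ p.1

/-- The holomorphic factor `-i ∂ψ/∂z_j + ∂φ/∂z_j` of the eikonal equation. -/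
def holFactor (φ : Cn n → ℝ) (Ψ : Cn n × Cn n → ℂ) (j : Fin n) : Cn n × Cn n → ℂ :=
  (-I) • dirDeriv (holVec (zVec j)) Ψ + dirDeriv (holVec (zVec j)) fun p => cplx φ p.1

lemma holFactor_eq_conj_antiholFactor (j : Fin n) (p : Cn n × Cn n) :
    holFactor φ Ψ j p
      = (starRingEnd ℂ) (antiholFactor φ (fun q => (starRingEnd ℂ) (Ψ q)) j p) := by
  have hφ := dirDeriv_holVec_conj (fun q : Cn n × Cn n => cplx φ q.1) (zVec j) p
  have hΨ := dirDeriv_holVec_conj (fun q => (starRingEnd ℂ) (Ψ q)) (zVec j) p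
  simp only [cplx, conj_ofReal, conj_conj] at hφ hΨ
  simp [holFactor, antiholFactor, cplx, hφ, hΨ]

lemma contDiff_cplx_fst (hφ : PhiOK lam φ) :
    ContDiff ℝ ∞ fun p : Cn n × Cn n => cplx φ p.1 :=
  ofRealCLM.contDiff.comp (hφ.1.comp contDiff_fst)

lemma contDiff_antiholFactor (hφ : PhiOK lam φ) (hΨ : ContDiff ℝ ∞ Ψ) (j : Fin n) :
    ContDiff ℝ ∞ (antiholFactor φ Ψ j) :=
  ((contDiff_dirDeriv hΨ _).const_smul I).add (contDiff_dirDeriv (contDiff_cplx_fst hφ) _)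

lemma contDiff_holFactor (hφ : PhiOK lam φ) (hΨ : ContDiff ℝ ∞ Ψ) (j : Fin n) :
    ContDiff ℝ ∞ (holFactor φ Ψ j) :=
  ((contDiff_dirDeriv hΨ _).const_smul (-I)).add (contDiff_dirDeriv (contDiff_cplx_fst hφ) _)

lemma isBigO_cplx_fst (hφ : PhiOK lam φ) :
    (fun p : Cn n × Cn n => cplx φ p.1 - ((∑ j, lam j * normSq (p.1 j) : ℝ) : ℂ))
      =O[nhds 0] fun p => ‖p‖ ^ 3 := by
  have hfst : Filter.Tendsto (Prod.fst : Cn n × Cn n → Cn n) (nhds 0) (nhds 0) :=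
    continuous_fst.tendsto' 0 0 rfl
  have hnorm : (fun p : Cn n × Cn n => ‖p.1‖ ^ 3) =O[nhds 0] fun p => ‖p‖ ^ 3 :=
    .of_norm_le fun p => by simpa using pow_le_pow_left₀ (norm_nonneg _) (norm_fst_le p) 3
  refine .of_norm_left (((hφ.2.comp_tendsto hfst).trans hnorm).norm_left.congr_left fun p => ?_)
  rw [cplx, ← ofReal_sub, norm_real]
  rfl

/-- The quadratic part of `i ψ + φ`, arranged so that `∂/∂z̄_j` kills its second summand. -/
def twistedQuadratic (lam mu : Fin n → ℝ) : Cn n × Cn n → ℂ :=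
  ∑ k, ((lam k - mu k : ℂ) • conjSMul (diffCoord k) (diffCoord k)
    + (lam k : ℂ) • conjSMul (sndCoord k) ((2 : ℂ) • diffCoord k + sndCoord k))

lemma twistedQuadratic_apply (p : Cn n × Cn n) :
    twistedQuadratic lam mu p
      = I * quadraticPhase lam mu p + ((∑ j, lam j * normSq (p.1 j) : ℝ) : ℂ) := by
  simp only [twistedQuadratic, quadraticPhase, Finset.sum_apply, mul_add, ← mul_assoc, I_mul_I,
    Finset.mul_sum, ofReal_sum, ← Finset.sum_add_distrib]
  refine Finset.sum_congr rfl fun j _ => ?_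
  simp only [coe_smul, Pi.add_apply, Pi.smul_apply, conjSMul, diffCoord_apply, map_sub, smul_eq_mul,
    sndCoord_apply, add_apply, smul_apply, real_smul, ofReal_mul, normSq_eq_conj_mul_self, neg_mul,
    one_mul]
  ring

lemma contDiff_twistedQuadratic : ContDiff ℝ ∞ (twistedQuadratic lam mu) := by
  simpa only [twistedQuadratic, Finset.sum_fn] using! ContDiff.sum fun k _ =>
    ((contDiff_conjSMul _ _).const_smul (lam k - mu k : ℂ)).add
      ((contDiff_conjSMul _ _).const_smul (lam k : ℂ))

lemma dirDeriv_twistedQuadratic (j : Fin n) :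
    dirDeriv (antiholVec (zVec j)) (twistedQuadratic lam mu)
      = (lam j - mu j : ℂ) • ⇑(diffCoord j) := by
  have hconj (L M : Cn n × Cn n →L[ℂ] ℂ) : Differentiable ℝ (conjSMul L M) :=
    (contDiff_conjSMul L M).differentiable (by simp)
  have hsmul (c : ℂ) (L M : Cn n × Cn n →L[ℂ] ℂ) : Differentiable ℝ (c • conjSMul L M) :=
    (hconj L M).const_smul c
  have hsnd (k : Fin n) : sndCoord k (zVec j) = 0 := rfl
  rw [twistedQuadratic, dirDeriv_sum _ fun k => (hsmul _ _ _).add (hsmul _ _ _)]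
  simp only [dirDeriv_add (hsmul _ _ _) (hsmul _ _ _), dirDeriv_const_smul (hconj _ _),
    dirDeriv_antiholVec_conjSMul, diffCoord_zVec, hsnd]
  simp [apply_ite (starRingEnd ℂ)]

lemma vanishesToOrder_antiholFactor_sub (hφ : PhiOK lam φ) (hΨ : ContDiff ℝ ∞ Ψ)
    (hquad : (fun p => Ψ p - quadraticPhase lam mu p) =O[nhds 0] fun p => ‖p‖ ^ 3) (j : Fin n) :
    VanishesToOrder 2 (antiholFactor φ Ψ j - (lam j - mu j : ℂ) • ⇑(diffCoord j)) 0 := by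
  have hΦ := contDiff_cplx_fst hφ
  have hIΨ : ContDiff ℝ ∞ (I • Ψ) := hΨ.const_smul I
  have hsum : ContDiff ℝ ∞ (I • Ψ + fun p => cplx φ p.1) := hIΨ.add hΦ
  have htwisted :
      VanishesToOrder 3 ((I • Ψ + fun p => cplx φ p.1) - twistedQuadratic lam mu) 0 := by
    refine vanishesToOrder_of_isBigO (hsum.sub contDiff_twistedQuadratic) ?_
    simp only [sub_zero]
    refine ((hquad.const_mul_left I).add (isBigO_cplx_fst hφ)).congr_left fun p => ?_
    simp only [Pi.add_apply, Pi.smul_apply, smul_eq_mul, twistedQuadratic_apply]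
    ring
  have hderiv := htwisted.dirDeriv (antiholVec (zVec j))
  rwa [dirDeriv_sub (hsum.differentiable (by simp))
      (contDiff_twistedQuadratic.differentiable (by simp)),
    dirDeriv_add (hIΨ.differentiable (by simp)) (hΦ.differentiable (by simp)),
    dirDeriv_const_smul (hΨ.differentiable (by simp)), dirDeriv_twistedQuadratic] at hderiv

lemma vanishesToOrder_holFactor_sub (hφ : PhiOK lam φ) (hΨ : ContDiff ℝ ∞ Ψ)
    (hquad : (fun p => Ψ p - quadraticPhase lam mu p) =O[nhds 0] fun p => ‖p‖ ^ 3) (j : Fin n) :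
    VanishesToOrder 2
      (holFactor φ Ψ j - fun p => (lam j + mu j : ℂ) * (starRingEnd ℂ) (diffCoord j p)) 0 := by
  have hquad_conj : (fun p => (starRingEnd ℂ) (Ψ p) - quadraticPhase lam (-mu) p)
      =O[nhds 0] fun p => ‖p‖ ^ 3 := by
    refine .of_norm_left (hquad.norm_left.congr_left fun p => ?_)
    rw [← conj_quadraticPhase, ← map_sub, norm_conj]
  have hanti := vanishesToOrder_antiholFactor_sub hφ (conjCLE.contDiff.comp hΨ) hquad_conj j
  convert hanti.clm_comp conjCLE.toContinuousLinearMap using 1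
  funext p
  simp only [Pi.sub_apply, holFactor_eq_conj_antiholFactor, ContinuousAlgEquiv.coe_coeCLE,
    Pi.neg_apply, ofReal_neg, sub_neg_eq_add, Pi.smul_apply, smul_eq_mul,
    ContinuousLinearEquiv.coe_coe, ContinuousAlgEquiv.coeCLE_apply, conjCAE_apply, map_sub, map_mul,
    map_add, conj_ofReal, sub_left_inj]
  rfl

end QuadraticPart

section Eikonal

variable {n N : ℕ} {lam : Fin n → ℝ} {φ : Cn n → ℝ} {Ψ Ψ₁ Ψ₂ : Cn n × Cn n → ℂ}

/-- The left-hand side of the eikonal equation (d). -/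
def eikonal (φ : Cn n → ℝ) (Ψ : Cn n × Cn n → ℂ) : Cn n × Cn n → ℂ :=
  ∑ j, antiholFactor φ Ψ j * holFactor φ Ψ j

/-- The part of admissibility that determines the Taylor expansion at the origin: conditions (a)
and (e), and condition (d) at the origin. -/
structure IsPhaseGerm (lam : Fin n → ℝ) (φ : Cn n → ℝ) (Ψ : Cn n × Cn n → ℂ) : Prop where
  contDiff : ContDiff ℝ ∞ Ψ
  diag_eq_zero : ∀ z, Ψ (z, z) = 0
  eq_neg_conj_swap : ∀ p, Ψ p = -(starRingEnd ℂ) (Ψ p.swap)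
  eikonal_eq_zero : ∀ m, iteratedFDeriv ℝ m (eikonal φ Ψ) 0 = 0
  isBigO_sub_quadraticPhase :
    (fun p => Ψ p - quadraticPhase lam (fun j => |lam j|) p) =O[nhds 0] fun p => ‖p‖ ^ 3

lemma Admissible.isPhaseGerm {ψ : Cn n → Cn n → ℂ} (hφ : PhiOK lam φ) (h : Admissible lam φ ψ) :
    IsPhaseGerm lam φ fun p => ψ p.1 p.2 := by
  obtain ⟨hsmooth, hdiag, hantisymm, -, -, -, -, -, heik, hquad⟩ := h
  refine ⟨hsmooth, hdiag, fun p => hantisymm p.1 p.2, fun m => ?_, hquad⟩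
  rw [← Prod.mk_zero_zero, ← heik m 0]
  congr 1
  funext p
  have hψ := hsmooth.differentiable (by simp)
  have hΦ := (contDiff_cplx_fst hφ).differentiable (by simp)
  simp only [eikonal, antiholFactor, holFactor, Finset.sum_apply, Pi.mul_apply, Pi.add_apply,
    Pi.smul_apply, smul_eq_mul, ← wdb_eq_dirDeriv hψ, ← wd_eq_dirDeriv hψ, ← wdb_eq_dirDeriv hΦ,
    ← wd_eq_dirDeriv hΦ]

lemma contDiff_eikonal (hφ : PhiOK lam φ) (hΨ : ContDiff ℝ ∞ Ψ) : ContDiff ℝ ∞ (eikonal φ Ψ) := by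
  simpa only [eikonal, Finset.sum_fn] using! ContDiff.sum fun j _ =>
    (contDiff_antiholFactor hφ hΨ j).mul (contDiff_holFactor hφ hΨ j)

lemma eikonal_sub_eikonal (h₁ : Differentiable ℝ Ψ₁) (h₂ : Differentiable ℝ Ψ₂) :
    eikonal φ Ψ₁ - eikonal φ Ψ₂ = I • ∑ j,
      (dirDeriv (antiholVec (zVec j)) (Ψ₁ - Ψ₂) * holFactor φ Ψ₁ j
        - antiholFactor φ Ψ₂ j * dirDeriv (holVec (zVec j)) (Ψ₁ - Ψ₂)) := by
  rw [eikonal, eikonal, ← Finset.sum_sub_distrib, Finset.smul_sum]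
  refine Finset.sum_congr rfl fun j _ => funext fun p => ?_
  simp only [antiholFactor, holFactor, neg_smul, Pi.sub_apply, Pi.mul_apply, Pi.add_apply,
    Pi.smul_apply, smul_eq_mul, Pi.neg_apply, dirDeriv_sub h₁ h₂]
  ring

/-- The Euler operator obtained by linearizing the eikonal equation at the quadratic model. -/
def transportOp (lam : Fin n → ℝ) (u : Cn n × Cn n → ℂ) : Cn n × Cn n → ℂ :=
  eulerOp (transportCoord lam) (transportVec lam) (fun j => ((2 * |lam j| : ℝ) : ℂ)) 0 u

lemma transportOp_eq_sum (u : Cn n × Cn n → ℂ) :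
    transportOp lam u = ∑ j,
      (dirDeriv (antiholVec (zVec j)) u *
          (fun p => (lam j + |lam j| : ℂ) * (starRingEnd ℂ) (diffCoord j p))
        - ((lam j - |lam j| : ℂ) • ⇑(diffCoord j)) * dirDeriv (holVec (zVec j)) u) := by
  rw [transportOp, eulerOp, zero_smul, zero_add]
  refine Finset.sum_congr rfl fun j _ => funext fun p => ?_
  by_cases hj : 0 < lam j
  · simp only [abs_of_pos hj, ofReal_mul, ofReal_ofNat, transportCoord, hj, ↓reduceIte,
      transportVec, smul_eq_mul, Pi.smul_apply, Pi.mul_apply, ContinuousLinearMap.comp_apply,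
      ContinuousLinearMap.coe_restrictScalars', ContinuousLinearEquiv.coe_coe,
      ContinuousAlgEquiv.coeCLE_apply, conjCAE_apply, sub_self, zero_smul, zero_mul, Pi.sub_apply,
      Pi.zero_apply, sub_zero]
    ring
  · simp [transportCoord, transportVec, hj, abs_of_nonpos (not_lt.1 hj), ← two_mul]

lemma vanishesToOrder_transportOp (hφ : PhiOK lam φ) (h₁ : IsPhaseGerm lam φ Ψ₁)
    (h₂ : IsPhaseGerm lam φ Ψ₂) (h : VanishesToOrder (N + 1) (Ψ₁ - Ψ₂) 0) :
    VanishesToOrder (N + 2) (transportOp lam (Ψ₁ - Ψ₂)) 0 := by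
  have heik {Ψ : Cn n × Cn n → ℂ} (hΨ : IsPhaseGerm lam φ Ψ) :
      VanishesToOrder (N + 2) (eikonal φ Ψ) 0 :=
    ⟨contDiff_eikonal hφ hΨ.contDiff, fun m _ => hΨ.eikonal_eq_zero m⟩
  have hhol := vanishesToOrder_holFactor_sub hφ h₁.contDiff h₁.isBigO_sub_quadraticPhase
  have hanti := vanishesToOrder_antiholFactor_sub hφ h₂.contDiff h₂.isBigO_sub_quadraticPhase
  have hremainder := VanishesToOrder.sum Finset.univ fun j _ =>
    ((h.dirDeriv (antiholVec (zVec j))).smul (hhol j)).sub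
      ((h.dirDeriv (holVec (zVec j))).smul (hanti j))
  convert (((heik h₁).sub (heik h₂)).const_smul (-I)).sub hremainder using 1
  rw [transportOp_eq_sum, eikonal_sub_eikonal (h₁.contDiff.differentiable (by simp))
      (h₂.contDiff.differentiable (by simp)), smul_smul, neg_mul, I_mul_I, neg_neg, one_smul,
    ← Finset.sum_sub_distrib]
  refine Finset.sum_congr rfl fun j _ => funext fun p => ?_
  simp only [Algebra.smul_mul_assoc, Pi.sub_apply, Pi.mul_apply, Pi.smul_apply, smul_eq_mul]
  ring

lemma IsPhaseGerm.vanishesToOrder_sub (hlam : ∀ j, lam j ≠ 0) (hφ : PhiOK lam φ)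
    (h₁ : IsPhaseGerm lam φ Ψ₁) (h₂ : IsPhaseGerm lam φ Ψ₂) :
    VanishesToOrder (N + 1) (Ψ₁ - Ψ₂) 0 := by
  have hu : ContDiff ℝ ∞ (Ψ₁ - Ψ₂) := h₁.contDiff.sub h₂.contDiff
  have hdiag : ∀ p ∈ diagonal n, (Ψ₁ - Ψ₂) p = 0 := by
    rintro ⟨z, w⟩ (rfl : z = w)
    simp [h₁.diag_eq_zero, h₂.diag_eq_zero]
  induction N with
  | zero =>
    exact vanishesToOrder_succ_iff_dirDeriv.2
      ⟨hu, hdiag 0 (zero_mem _), fun X => .of_contDiff (contDiff_dirDeriv hu X)⟩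
  | succ N ih =>
    have htransport (j : Fin n) :
        VanishesToOrder (N + 1) (dirDeriv (transportVec lam j) (Ψ₁ - Ψ₂)) 0 :=
      vanishesToOrder_dirDeriv_of_eulerOp (transportCoord_dual lam) (by simpa using hlam) hu
        (vanishesToOrder_transportOp hφ h₁ h₂ ih) j
    have hantisymm (p : Cn n × Cn n) : (Ψ₁ - Ψ₂) p = -(starRingEnd ℂ) ((Ψ₁ - Ψ₂) p.swap) := by
      rw [Pi.sub_apply, h₁.eq_neg_conj_swap, h₂.eq_neg_conj_swap, Pi.sub_apply, map_sub]
      ring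
    refine vanishesToOrder_succ_of_eqOn_submodule
      (span_transportVec_reflectedVec_diagonal lam) hu hdiag ?_
    rintro _ (⟨j, rfl⟩ | ⟨j, rfl⟩)
    exacts [htransport j, vanishesToOrder_dirDeriv_reflectedVec hu hantisymm (htransport j)]

end Eikonal

theorem statement10_general {n : ℕ} {lam : Fin n → ℝ} (hlam : ∀ j, lam j ≠ 0) {φ : Cn n → ℝ}
    (hφ : PhiOK lam φ) {Ψ₁ Ψ₂ : Cn n × Cn n → ℂ} (h₁ : IsPhaseGerm lam φ Ψ₁)
    (h₂ : IsPhaseGerm lam φ Ψ₂) (m : ℕ) : iteratedFDeriv ℝ m (Ψ₁ - Ψ₂) 0 = 0 :=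
  (h₁.vanishesToOrder_sub hlam hφ h₂).iteratedFDeriv_eq_zero m m.lt_succ_self

/-- two admissible phases differ to infinite order at `(0,0)`;
the Taylor expansion of an admissible phase at `(0,0)` is uniquely determined. -/
theorem statement10 (n q : ℕ) (hn : 1 ≤ n) (hq : q ≤ n) (lam : Fin n → ℝ)
    (hneg : ∀ j : Fin n, (j : ℕ) < q → lam j < 0)
    (hpos : ∀ j : Fin n, q ≤ (j : ℕ) → 0 < lam j)
    (φ : Cn n → ℝ) (hφ : PhiOK lam φ)
    (ψ₁ ψ₂ : Cn n → Cn n → ℂ)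
    (h₁ : Admissible lam φ ψ₁) (h₂ : Admissible lam φ ψ₂) :
    ∀ m : ℕ,
      iteratedFDeriv ℝ m (fun p : Cn n × Cn n => ψ₁ p.1 p.2 - ψ₂ p.1 p.2)
        (0, 0) = 0 := by
  have hlam (j : Fin n) : lam j ≠ 0 :=
    (lt_or_ge (j : ℕ) q).elim (fun hj => (hneg j hj).ne) fun hj => (hpos j hj).ne'
  exact statement10_general hlam hφ (h₁.isPhaseGerm hφ) (h₂.isPhaseGerm hφ)
end
end

section
/- For every smooth B : ℂ^n → ⋀^q ℂ^n and every z ∈ ℂ^n: e^{−ikψ(z)} · □_k(e^{ikψ} B)(z) = k^2 Σ_{j=1}^n (i ∂ψ/∂z̄_j + ∂φ/∂z̄_j)(−i ∂ψ/∂z_j + ∂φ/∂z_j) B + k Σ_{j,t=1}^n [∂/∂z̄_j(−i ∂ψ/∂z_t + ∂φ/∂z_t)] (a_j a_t^*) B − k Σ_{j,t=1}^n [∂/∂z_t(i ∂ψ/∂z̄_j + ∂φ/∂z̄_j)] (a_t^* a_j) B + k Σ_{j=1}^n (−i ∂ψ/∂z_j + ∂φ/∂z_j) ∂B/∂z̄_j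 − k Σ_{j=1}^n (i ∂ψ/∂z̄_j + ∂φ/∂z̄_j) ∂B/∂z_j − Σ_{j=1}^n ∂^2B/∂z_j∂z̄_j, all evaluated at z. -/
open Complex Asymptotics

attribute [local instance] Classical.propDecidable

noncomputable section

/-- The full exterior algebra `⋀^• ℂⁿ`, with orthonormal basis `ē_S` indexed by
subsets `S ⊆ {1,…,n}`, modelled as coefficient functions. -/
abbrev ExtA (n : ℕ) := Finset (Fin n) → ℂ

/-- The sign `(−1)^{#{s ∈ S : s < j}}`. -/
def sgnE {n : ℕ} (j : Fin n) (S : Finset (Fin n)) : ℂ :=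
  (-1 : ℂ) ^ (S.filter fun s => s < j).card

/-- Left exterior multiplication `a_j = ē_j ∧ ·`. -/
def aOp {n : ℕ} (j : Fin n) (f : ExtA n) : ExtA n := fun S =>
  if j ∈ S then sgnE j S * f (S.erase j) else 0

/-- Its Hermitian adjoint `a_j^*` (interior multiplication). -/
def aSt {n : ℕ} (j : Fin n) (f : ExtA n) : ExtA n := fun S =>
  if j ∈ S then 0 else sgnE j S * f (insert j S)

/-- Componentwise Wirtinger derivative `∂B/∂z_j` of a `⋀^•ℂⁿ`-valued map. -/
def wdE {n : ℕ} (j : Fin n) (B : Cn n → ExtA n) : Cn n → ExtA n := fun z S =>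
  wd j (fun x => B x S) z

/-- Componentwise Wirtinger derivative `∂B/∂z̄_j` of a `⋀^•ℂⁿ`-valued map. -/
def wdbE {n : ℕ} (j : Fin n) (B : Cn n → ExtA n) : Cn n → ExtA n := fun z S =>
  wdb j (fun x => B x S) z

/-- `∂̄_s u = Σ_j a_j (∂u/∂z̄_j + k (∂φ/∂z̄_j) u)`. -/
def dbarS {n : ℕ} (k : ℝ) (φ : Cn n → ℝ) (B : Cn n → ExtA n) : Cn n → ExtA n := fun z =>
  ∑ j : Fin n, aOp j (fun S => wdbE j B z S + (k : ℂ) * wdb j (cplx φ) z * B z S)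

/-- `∂̄_s^* u = Σ_j a_j^* (−∂u/∂z_j + k (∂φ/∂z_j) u)`. -/
def dbarSt {n : ℕ} (k : ℝ) (φ : Cn n → ℝ) (B : Cn n → ExtA n) : Cn n → ExtA n := fun z =>
  ∑ j : Fin n, aSt j (fun S => - wdE j B z S + (k : ℂ) * wd j (cplx φ) z * B z S)

/-- The Kodaira Laplacian `□_k = ∂̄_s ∂̄_s^* + ∂̄_s^* ∂̄_s`. -/
def boxK {n : ℕ} (k : ℝ) (φ : Cn n → ℝ) (B : Cn n → ExtA n) : Cn n → ExtA n := fun z =>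
  dbarS k φ (dbarSt k φ B) z + dbarSt k φ (dbarS k φ B) z

/-!
Conjugation by `e^{ikψ}` turns `∂/∂z̄_j + k ∂φ/∂z̄_j` into `P_j = ∂/∂z̄_j + k α_j` with
`α_j = i ∂ψ/∂z̄_j + ∂φ/∂z̄_j`, and `-∂/∂z_t + k ∂φ/∂z_t` into `Q_t = -∂/∂z_t + k β_t` with
`β_t = -i ∂ψ/∂z_t + ∂φ/∂z_t`. Hence the conjugated Laplacian is
`∑_{j,t} (a_j a_t^* P_j Q_t + a_t^* a_j Q_t P_j)`. The products `P_j Q_t` and `Q_t P_j` have the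
same part in which no coefficient is differentiated. On this common part the anticommutation
relation `a_j a_t^* + a_t^* a_j = δ_{jt}` collapses the double sum to its diagonal, and what remains
are the terms with `∂β_t/∂z̄_j` and `∂α_j/∂z_t`.
-/

section ComplexDeriv

variable {V E F : Type*} [NormedAddCommGroup V] [NormedSpace ℝ V]
  [NormedAddCommGroup E] [NormedSpace ℝ E] [NormedSpace ℂ E]
  [NormedAddCommGroup F] [NormedSpace ℝ F] [NormedSpace ℂ F]

/-- The derivative of `f` along the complexified tangent vector `v + i w`, encoded as the pair
`(v, w)`. Wirtinger derivatives are of this form. -/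
def complexDeriv (X : V × V) (f : V → E) (x : V) : E :=
  fderiv ℝ f x X.1 + I • fderiv ℝ f x X.2

theorem complexDeriv_neg (X : V × V) (f : V → E) (x : V) :
    complexDeriv (-X) f x = -complexDeriv X f x := by
  simp only [complexDeriv, Prod.fst_neg, Prod.snd_neg, map_neg, smul_neg, neg_add]

theorem complexDeriv_add (X : V × V) {f g : V → E} {x : V} (hf : DifferentiableAt ℝ f x)
    (hg : DifferentiableAt ℝ g x) :
    complexDeriv X (fun y => f y + g y) x = complexDeriv X f x + complexDeriv X g x := by
  simp only [complexDeriv, fderiv_fun_add hf hg, add_apply]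
  module

theorem complexDeriv_sum (X : V × V) {ι : Type*} (s : Finset ι) {f : ι → V → E} {x : V}
    (hf : ∀ i ∈ s, DifferentiableAt ℝ (f i) x) :
    complexDeriv X (fun y => ∑ i ∈ s, f i y) x = ∑ i ∈ s, complexDeriv X (f i) x := by
  simp only [complexDeriv, fderiv_fun_sum hf, sum_apply, Finset.smul_sum, Finset.sum_add_distrib]

theorem complexDeriv_const_smul [SMulCommClass ℝ ℂ E] (X : V × V) {f : V → E} {x : V}
    (hf : DifferentiableAt ℝ f x) (c : ℂ) :
    complexDeriv X (fun y => c • f y) x = c • complexDeriv X f x := by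
  simp only [complexDeriv, fderiv_fun_const_smul hf, smul_apply]
  module

theorem complexDeriv_const_mul (X : V × V) {f : V → ℂ} {x : V} (hf : DifferentiableAt ℝ f x)
    (c : ℂ) : complexDeriv X (fun y => c * f y) x = c * complexDeriv X f x :=
  complexDeriv_const_smul X hf c

theorem complexDeriv_smul [IsScalarTower ℝ ℂ E] (X : V × V) {f : V → ℂ} {g : V → E} {x : V}
    (hf : DifferentiableAt ℝ f x) (hg : DifferentiableAt ℝ g x) :
    complexDeriv X (fun y => f y • g y) x =
      complexDeriv X f x • g x + f x • complexDeriv X g x := by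
  simp only [complexDeriv, fderiv_fun_smul hf hg, add_apply, smul_apply,
    ContinuousLinearMap.smulRight_apply, smul_eq_mul]
  module

theorem complexDeriv_cexp (X : V × V) {g : V → ℂ} {x : V} (hg : DifferentiableAt ℝ g x) :
    complexDeriv X (fun y => exp (g y)) x = exp (g x) * complexDeriv X g x := by
  simp only [complexDeriv, hg.hasFDerivAt.cexp.fderiv, smul_apply, smul_eq_mul]
  ring

theorem complexDeriv_clm_apply [IsScalarTower ℝ ℂ E] [IsScalarTower ℝ ℂ F] (X : V × V)
    (L : E →L[ℂ] F) {f : V → E} {x : V} (hf : DifferentiableAt ℝ f x) :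
    complexDeriv X (fun y => L (f y)) x = L (complexDeriv X f x) := by
  have hL : fderiv ℝ (fun y => L (f y)) x = (L.restrictScalars ℝ).comp (fderiv ℝ f x) :=
    ((L.restrictScalars ℝ).hasFDerivAt.comp x hf.hasFDerivAt).fderiv
  simp [complexDeriv, hL]

theorem contDiff_complexDeriv [SMulCommClass ℝ ℂ E] (X : V × V) {f : V → E} {m n : WithTop ℕ∞}
    (hf : ContDiff ℝ n f) (hmn : m + 1 ≤ n) : ContDiff ℝ m (complexDeriv X f) :=
  have hf' : ContDiff ℝ m (fderiv ℝ f) := hf.fderiv_right hmn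
  (hf'.clm_apply contDiff_const).add ((hf'.clm_apply contDiff_const).const_smul I)

theorem differentiable_complexDeriv [SMulCommClass ℝ ℂ E] (X : V × V) {f : V → E}
    (hf : ContDiff ℝ 2 f) : Differentiable ℝ (complexDeriv X f) :=
  (contDiff_complexDeriv X hf one_add_one_eq_two.le).differentiable one_ne_zero

theorem complexDeriv_complexDeriv [SMulCommClass ℝ ℂ E] (X Y : V × V) {f : V → E}
    (hf : ContDiff ℝ 2 f) (x : V) :
    complexDeriv X (complexDeriv Y f) x =
      fderiv ℝ (fderiv ℝ f) x X.1 Y.1 + I • fderiv ℝ (fderiv ℝ f) x X.1 Y.2 +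
        I • fderiv ℝ (fderiv ℝ f) x X.2 Y.1 - fderiv ℝ (fderiv ℝ f) x X.2 Y.2 := by
  have hf' : Differentiable ℝ (fderiv ℝ f) :=
    (hf.fderiv_right one_add_one_eq_two.le).differentiable one_ne_zero
  have hderiv (v w : V) :
      fderiv ℝ (fun y => fderiv ℝ f y v) x w = fderiv ℝ (fderiv ℝ f) x w v := by
    simp [fderiv_clm_apply (hf' x) (differentiableAt_const v)]
  have hdiff (v : V) : DifferentiableAt ℝ (fun y => fderiv ℝ f y v) x := by fun_prop
  change complexDeriv X (fun y => fderiv ℝ f y Y.1 + I • fderiv ℝ f y Y.2) x = _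
  rw [complexDeriv_add X (hdiff _) ((hdiff _).fun_const_smul I),
    complexDeriv_const_smul X (hdiff _)]
  simp only [complexDeriv, hderiv, smul_add, smul_smul, I_mul_I]
  module

theorem complexDeriv_comm [SMulCommClass ℝ ℂ E] (X Y : V × V) {f : V → E}
    (hf : ContDiff ℝ 2 f) (x : V) :
    complexDeriv X (complexDeriv Y f) x = complexDeriv Y (complexDeriv X f) x := by
  have hsymm : IsSymmSndFDerivAt ℝ f x := hf.contDiffAt.isSymmSndFDerivAt (by simp)
  simp only [complexDeriv_complexDeriv _ _ hf, hsymm.eq X.1, hsymm.eq X.2]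
  abel

theorem complexDeriv_apply_pi {κ : Type*} [Fintype κ] (X : V × V) {f : V → κ → E} {x : V}
    (hf : DifferentiableAt ℝ f x) (i : κ) :
    complexDeriv X f x i = complexDeriv X (fun y => f y i) x := by
  simp [complexDeriv, fderiv_apply hf]

end ComplexDeriv

section TwistedDeriv

variable {V E F G ι κ : Type*} [NormedAddCommGroup V] [NormedSpace ℝ V]
  [NormedAddCommGroup E] [NormedSpace ℝ E] [NormedSpace ℂ E]
  [NormedAddCommGroup F] [NormedSpace ℂ F]
  [NormedAddCommGroup G] [NormedSpace ℂ G]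

/-- The first-order operator `X + a`: derivative along `X` plus multiplication by `a`. -/
def twistedDeriv (X : V × V) (a : V → ℂ) (u : V → E) (x : V) : E :=
  complexDeriv X u x + a x • u x

/-- The normally ordered product of `X + a` and `Y + b`: the part of their composition in which no
coefficient is differentiated. -/
def normalOrdered (X : V × V) (a : V → ℂ) (Y : V × V) (b : V → ℂ) (u : V → E) (x : V) : E :=
  complexDeriv X (complexDeriv Y u) x + b x • complexDeriv X u x + a x • complexDeriv Y u x
    + (a x * b x) • u x

/-- The first-order operator `u ↦ ∑ j, L j ((X j + a j) u)` with constant symbols `L j`. Both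
`∂̄_s` and `∂̄_s^*` are of this form. -/
def symbolOp [Fintype ι] (L : ι → E →L[ℂ] F) (X : ι → V × V) (a : ι → V → ℂ) (u : V → E)
    (x : V) : F :=
  ∑ j, L j (twistedDeriv (X j) (a j) u x)

theorem differentiable_twistedDeriv [IsScalarTower ℝ ℂ E] (X : V × V) {a : V → ℂ} {u : V → E}
    (ha : Differentiable ℝ a) (hu : ContDiff ℝ 2 u) : Differentiable ℝ (twistedDeriv X a u) :=
  (differentiable_complexDeriv X hu).add (ha.smul (hu.differentiable two_ne_zero))

theorem twistedDeriv_cexp_smul [IsScalarTower ℝ ℂ E] (X : V × V) (a : V → ℂ) {g : V → ℂ}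
    {u : V → E} {x : V} (hg : DifferentiableAt ℝ g x) (hu : DifferentiableAt ℝ u x) :
    twistedDeriv X a (fun y => exp (g y) • u y) x =
      exp (g x) • twistedDeriv X (fun y => complexDeriv X g y + a y) u x := by
  simp only [twistedDeriv, complexDeriv_smul X hg.cexp hu, complexDeriv_cexp X hg]
  module

theorem twistedDeriv_twistedDeriv [IsScalarTower ℝ ℂ E] (X Y : V × V) (a : V → ℂ) {b : V → ℂ}
    {u : V → E} (hb : Differentiable ℝ b) (hu : ContDiff ℝ 2 u) (x : V) :
    twistedDeriv X a (twistedDeriv Y b u) x =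
      normalOrdered X a Y b u x + complexDeriv X b x • u x := by
  have hu' : DifferentiableAt ℝ u x := hu.differentiable two_ne_zero x
  have hYu : DifferentiableAt ℝ (complexDeriv Y u) x := differentiable_complexDeriv Y hu x
  have hX : complexDeriv X (twistedDeriv Y b u) x =
      complexDeriv X (complexDeriv Y u) x
        + (complexDeriv X b x • u x + b x • complexDeriv X u x) := by
    unfold twistedDeriv
    rw [complexDeriv_add X hYu ((hb x).fun_smul hu'), complexDeriv_smul X (hb x) hu']
  rw [twistedDeriv, hX, twistedDeriv, normalOrdered]
  module

theorem normalOrdered_comm [SMulCommClass ℝ ℂ E] (X Y : V × V) (a b : V → ℂ) {u : V → E}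
    (hu : ContDiff ℝ 2 u) (x : V) :
    normalOrdered X a Y b u x = normalOrdered Y b X a u x := by
  rw [normalOrdered, normalOrdered, complexDeriv_comm X Y hu]
  module

variable [Fintype ι] [Fintype κ]

theorem differentiable_symbolOp [IsScalarTower ℝ ℂ E] [NormedSpace ℝ F] [IsScalarTower ℝ ℂ F]
    (L : ι → E →L[ℂ] F) (X : ι → V × V) {a : ι → V → ℂ} {u : V → E}
    (ha : ∀ j, Differentiable ℝ (a j)) (hu : ContDiff ℝ 2 u) :
    Differentiable ℝ (symbolOp L X a u) :=
  Differentiable.fun_sum fun j _ =>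
    ((L j).restrictScalars ℝ).differentiable.comp (differentiable_twistedDeriv (X j) (ha j) hu)

theorem symbolOp_cexp_smul [IsScalarTower ℝ ℂ E] (L : ι → E →L[ℂ] F) (X : ι → V × V)
    (a : ι → V → ℂ) {g : V → ℂ} {u : V → E} {x : V} (hg : DifferentiableAt ℝ g x)
    (hu : DifferentiableAt ℝ u x) :
    symbolOp L X a (fun y => exp (g y) • u y) x =
      exp (g x) • symbolOp L X (fun j y => complexDeriv (X j) g y + a j y) u x := by
  simp only [symbolOp, twistedDeriv_cexp_smul _ _ hg hu, map_smul, Finset.smul_sum]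

theorem twistedDeriv_symbolOp [IsScalarTower ℝ ℂ E] [NormedSpace ℝ F] [IsScalarTower ℝ ℂ F]
    (X : V × V) (a : V → ℂ) (M : κ → E →L[ℂ] F) (Y : κ → V × V) {b : κ → V → ℂ} {u : V → E}
    (hb : ∀ t, Differentiable ℝ (b t)) (hu : ContDiff ℝ 2 u) (x : V) :
    twistedDeriv X a (symbolOp M Y b u) x =
      ∑ t, M t (twistedDeriv X a (twistedDeriv (Y t) (b t) u) x) := by
  have hdiff (t : κ) : DifferentiableAt ℝ (twistedDeriv (Y t) (b t) u) x :=
    differentiable_twistedDeriv (Y t) (hb t) hu x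
  have hX : complexDeriv X (symbolOp M Y b u) x =
      ∑ t, M t (complexDeriv X (twistedDeriv (Y t) (b t) u) x) := by
    have hMdiff (t : κ) : DifferentiableAt ℝ (fun y => M t (twistedDeriv (Y t) (b t) u y)) x :=
      ((M t).restrictScalars ℝ).differentiableAt.comp x (hdiff t)
    simp only [← complexDeriv_clm_apply X (M _) (hdiff _)]
    exact complexDeriv_sum X Finset.univ fun t _ => hMdiff t
  rw [twistedDeriv, hX]
  simp only [symbolOp, twistedDeriv, Finset.smul_sum, map_add, map_smul, Finset.sum_add_distrib,
    smul_add]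

theorem symbolOp_symbolOp [IsScalarTower ℝ ℂ E] [NormedSpace ℝ F] [IsScalarTower ℝ ℂ F]
    (L : ι → F →L[ℂ] G) (X : ι → V × V) (a : ι → V → ℂ) (M : κ → E →L[ℂ] F) (Y : κ → V × V)
    {b : κ → V → ℂ} {u : V → E} (hb : ∀ t, Differentiable ℝ (b t)) (hu : ContDiff ℝ 2 u) (x : V) :
    symbolOp L X a (symbolOp M Y b u) x =
      ∑ j, ∑ t, L j (M t
        (normalOrdered (X j) (a j) (Y t) (b t) u x + complexDeriv (X j) (b t) x • u x)) := by
  rw [symbolOp]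
  simp only [twistedDeriv_symbolOp _ _ M Y hb hu, twistedDeriv_twistedDeriv _ _ _ (hb _) hu,
    map_sum]

theorem symbolOp_anticommutator [DecidableEq ι] [IsScalarTower ℝ ℂ E] {L M : ι → E →L[ℂ] E}
    (hLM : ∀ j t v, L j (M t v) + M t (L j v) = if j = t then v else 0) (X Y : ι → V × V)
    {a b : ι → V → ℂ} {u : V → E} (ha : ∀ j, Differentiable ℝ (a j))
    (hb : ∀ j, Differentiable ℝ (b j)) (hu : ContDiff ℝ 2 u) (x : V) :
    symbolOp L X a (symbolOp M Y b u) x + symbolOp M Y b (symbolOp L X a u) x =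
      ∑ j, normalOrdered (Y j) (b j) (X j) (a j) u x
        + ∑ j, ∑ t, complexDeriv (X j) (b t) x • L j (M t (u x))
        + ∑ j, ∑ t, complexDeriv (Y t) (a j) x • M t (L j (u x)) := by
  have hpair (j t : ι) :
      L j (M t (normalOrdered (X j) (a j) (Y t) (b t) u x + complexDeriv (X j) (b t) x • u x))
        + M t (L j (normalOrdered (Y t) (b t) (X j) (a j) u x + complexDeriv (Y t) (a j) x • u x))
      = (if j = t then normalOrdered (Y t) (b t) (X j) (a j) u x else 0)
        + complexDeriv (X j) (b t) x • L j (M t (u x))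
        + complexDeriv (Y t) (a j) x • M t (L j (u x)) := by
    rw [normalOrdered_comm (X j) (Y t) _ _ hu, ← hLM]
    simp only [map_add, map_smul]
    abel
  rw [symbolOp_symbolOp L X a M Y hb hu, symbolOp_symbolOp M Y b L X ha hu,
    Finset.sum_comm (f := fun t j => M t _)]
  simp only [← Finset.sum_add_distrib, hpair]
  simp only [Finset.sum_add_distrib, Finset.sum_ite_eq, Finset.mem_univ, if_true]

end TwistedDeriv

section ExteriorAlgebra

variable {n : ℕ}

theorem sgnE_insert (j : Fin n) {t : Fin n} {S : Finset (Fin n)} (ht : t ∉ S) :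
    sgnE j (insert t S) = (if t < j then -1 else 1) * sgnE j S := by
  unfold sgnE
  rw [Finset.filter_insert]
  split_ifs
  · rw [Finset.card_insert_of_notMem (by simp [ht]), pow_succ']
  · rw [one_mul]

theorem sgnE_insert_self {j : Fin n} {S : Finset (Fin n)} (hj : j ∉ S) :
    sgnE j (insert j S) = sgnE j S := by
  simp [sgnE_insert j hj]

theorem sgnE_mul_self (j : Fin n) (S : Finset (Fin n)) : sgnE j S * sgnE j S = 1 := by
  simp [sgnE, ← mul_pow]

theorem sgnE_insert_mul_sgnE_insert {j t : Fin n} {S : Finset (Fin n)} (hjt : j ≠ t)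
    (hj : j ∉ S) (ht : t ∉ S) :
    sgnE t (insert j S) * sgnE j (insert t S) = -(sgnE j S * sgnE t S) := by
  rw [sgnE_insert t hj, sgnE_insert j ht]
  rcases hjt.lt_or_gt with h | h
  · rw [if_pos h, if_neg h.not_gt]; ring
  · rw [if_pos h, if_neg h.not_gt]; ring

theorem aOp_aSt_self_add (j : Fin n) (f : ExtA n) : aOp j (aSt j f) + aSt j (aOp j f) = f := by
  funext S
  by_cases hj : j ∈ S
  · obtain ⟨T, hjT, rfl⟩ : ∃ T, j ∉ T ∧ insert j T = S :=
      ⟨S.erase j, Finset.notMem_erase j S, Finset.insert_erase hj⟩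
    simp [aOp, aSt, hjT, sgnE_insert_self hjT, ← mul_assoc, sgnE_mul_self]
  · simp [aOp, aSt, hj, sgnE_insert_self hj, ← mul_assoc, sgnE_mul_self]

theorem aOp_aSt_add_of_ne {j t : Fin n} (hjt : j ≠ t) (f : ExtA n) :
    aOp j (aSt t f) + aSt t (aOp j f) = 0 := by
  funext S
  by_cases hj : j ∈ S
  · obtain ⟨T, hjT, rfl⟩ : ∃ T, j ∉ T ∧ insert j T = S :=
      ⟨S.erase j, Finset.notMem_erase j S, Finset.insert_erase hj⟩
    by_cases ht : t ∈ T
    · simp [aOp, aSt, ht, hjT]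
    · have hjtT : j ∉ insert t T := by simp [hjt, hjT]
      have hsign : sgnE t (insert j T) * sgnE j (insert j (insert t T)) =
          -(sgnE j (insert j T) * sgnE t T) := by
        rw [sgnE_insert_self hjtT, sgnE_insert_self hjT, sgnE_insert_mul_sgnE_insert hjt hjT ht]
      simp only [aOp, aSt, Pi.add_apply, Pi.zero_apply, Finset.insert_comm t j,
        Finset.erase_insert hjT, Finset.erase_insert hjtT, Finset.mem_insert, ht, hjt.symm, hj,
        or_false, true_or, if_true, if_false, ← mul_assoc, hsign]
      ring
  · simp [aOp, aSt, hj, hjt]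

theorem aOp_aSt_anticomm (j t : Fin n) (f : ExtA n) :
    aOp j (aSt t f) + aSt t (aOp j f) = if j = t then f else 0 := by
  split_ifs with hjt
  · rw [← hjt, aOp_aSt_self_add]
  · exact aOp_aSt_add_of_ne hjt f

/-- Exterior multiplication `a_j` as a continuous linear map. -/
def aOpL (j : Fin n) : ExtA n →L[ℂ] ExtA n := LinearMap.toContinuousLinearMap
  { toFun := aOp j
    map_add' _ _ := by funext; simp only [aOp, Pi.add_apply]; split_ifs <;> ring
    map_smul' _ _ := by
      funext; simp only [aOp, Pi.smul_apply, smul_eq_mul, RingHom.id_apply]; split_ifs <;> ring }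

/-- Interior multiplication `a_j^*` as a continuous linear map. -/
def aStL (j : Fin n) : ExtA n →L[ℂ] ExtA n := LinearMap.toContinuousLinearMap
  { toFun := aSt j
    map_add' _ _ := by funext; simp only [aSt, Pi.add_apply]; split_ifs <;> ring
    map_smul' _ _ := by
      funext; simp only [aSt, Pi.smul_apply, smul_eq_mul, RingHom.id_apply]; split_ifs <;> ring }

@[simp] theorem aOpL_apply (j : Fin n) (f : ExtA n) : aOpL j f = aOp j f := rfl

@[simp] theorem aStL_apply (j : Fin n) (f : ExtA n) : aStL j f = aSt j f := rfl

end ExteriorAlgebra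

section KodairaLaplacian

variable {n : ℕ}

/-- The complexified tangent vector `∂/∂z_j`. -/
def delVec (j : Fin n) : Cn n × Cn n := (1 / 2 : ℝ) • (Pi.single j 1, -Pi.single j I)

/-- The complexified tangent vector `∂/∂z̄_j`. -/
def delbarVec (j : Fin n) : Cn n × Cn n := (1 / 2 : ℝ) • (Pi.single j 1, Pi.single j I)

theorem wd_eq_complexDeriv (j : Fin n) (f : Cn n → ℂ) : wd j f = complexDeriv (delVec j) f := by
  funext z
  simp only [wd, one_div, complexDeriv, delVec, Prod.smul_mk, smul_neg, map_smul, real_smul,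
    ofReal_inv, ofReal_ofNat, map_neg, smul_eq_mul, mul_neg]
  ring

theorem wdb_eq_complexDeriv (j : Fin n) (f : Cn n → ℂ) :
    wdb j f = complexDeriv (delbarVec j) f := by
  funext z
  simp only [wdb, one_div, complexDeriv, delbarVec, Prod.smul_mk, map_smul, real_smul, ofReal_inv,
    ofReal_ofNat, smul_eq_mul]
  ring

theorem wdE_eq_complexDeriv (j : Fin n) {u : Cn n → ExtA n} (hu : Differentiable ℝ u) :
    wdE j u = complexDeriv (delVec j) u := by
  funext z S
  rw [wdE, wd_eq_complexDeriv, complexDeriv_apply_pi _ (hu z)]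

theorem wdbE_eq_complexDeriv (j : Fin n) {u : Cn n → ExtA n} (hu : Differentiable ℝ u) :
    wdbE j u = complexDeriv (delbarVec j) u := by
  funext z S
  rw [wdbE, wdb_eq_complexDeriv, complexDeriv_apply_pi _ (hu z)]

theorem dbarS_eq_symbolOp (k : ℝ) (φ : Cn n → ℝ) {u : Cn n → ExtA n}
    (hu : Differentiable ℝ u) :
    dbarS k φ u = symbolOp aOpL delbarVec (fun j z => k * wdb j (cplx φ) z) u := by
  funext z
  simp only [dbarS, symbolOp, wdbE_eq_complexDeriv _ hu]
  rfl

theorem dbarSt_eq_symbolOp (k : ℝ) (φ : Cn n → ℝ) {u : Cn n → ExtA n}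
    (hu : Differentiable ℝ u) :
    dbarSt k φ u = symbolOp aStL (-delVec) (fun j z => k * wd j (cplx φ) z) u := by
  funext z
  simp only [dbarSt, symbolOp, wdE_eq_complexDeriv _ hu, twistedDeriv, Pi.neg_apply,
    complexDeriv_neg]
  rfl

/-- The coefficient `α_j = i ∂ψ/∂z̄_j + ∂φ/∂z̄_j`. -/
def delbarCoeff (φ : Cn n → ℝ) (ψ : Cn n → ℂ) (j : Fin n) : Cn n → ℂ := fun z =>
  I * wdb j ψ z + wdb j (cplx φ) z

/-- The coefficient `β_j = -i ∂ψ/∂z_j + ∂φ/∂z_j`. -/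
def delCoeff (φ : Cn n → ℝ) (ψ : Cn n → ℂ) (j : Fin n) : Cn n → ℂ := fun z =>
  -I * wd j ψ z + wd j (cplx φ) z

variable {φ : Cn n → ℝ} {ψ : Cn n → ℂ}

theorem differentiable_delbarCoeff (hφ : ContDiff ℝ 2 φ) (hψ : ContDiff ℝ 2 ψ) (j : Fin n) :
    Differentiable ℝ (delbarCoeff φ ψ j) := by
  have hφ' : ContDiff ℝ 2 (cplx φ) := ofRealCLM.contDiff.comp hφ
  unfold delbarCoeff
  simp only [wdb_eq_complexDeriv]
  exact ((differentiable_complexDeriv _ hψ).const_mul I).add (differentiable_complexDeriv _ hφ')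

theorem differentiable_delCoeff (hφ : ContDiff ℝ 2 φ) (hψ : ContDiff ℝ 2 ψ) (j : Fin n) :
    Differentiable ℝ (delCoeff φ ψ j) := by
  have hφ' : ContDiff ℝ 2 (cplx φ) := ofRealCLM.contDiff.comp hφ
  unfold delCoeff
  simp only [wd_eq_complexDeriv]
  exact ((differentiable_complexDeriv _ hψ).const_mul (-I)).add (differentiable_complexDeriv _ hφ')

theorem dbarS_cexp_smul (k : ℝ) (hψ : Differentiable ℝ ψ) {u : Cn n → ExtA n}
    (hu : Differentiable ℝ u) :
    dbarS k φ (fun z => exp (k * I * ψ z) • u z) = fun z =>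
      exp (k * I * ψ z) • symbolOp aOpL delbarVec (fun j z => k * delbarCoeff φ ψ j z) u z := by
  have hkψ : Differentiable ℝ fun z => k * I * ψ z := hψ.const_mul _
  have hcoeff (j : Fin n) (z : Cn n) :
      complexDeriv (delbarVec j) (fun y => k * I * ψ y) z + k * wdb j (cplx φ) z =
        k * delbarCoeff φ ψ j z := by
    rw [complexDeriv_const_mul _ (hψ z), delbarCoeff, wdb_eq_complexDeriv j ψ]
    ring
  funext z
  rw [dbarS_eq_symbolOp k φ (hkψ.cexp.fun_smul hu), symbolOp_cexp_smul _ _ _ (hkψ z) (hu z)]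
  simp only [hcoeff]

theorem dbarSt_cexp_smul (k : ℝ) (hψ : Differentiable ℝ ψ) {u : Cn n → ExtA n}
    (hu : Differentiable ℝ u) :
    dbarSt k φ (fun z => exp (k * I * ψ z) • u z) = fun z =>
      exp (k * I * ψ z) • symbolOp aStL (-delVec) (fun j z => k * delCoeff φ ψ j z) u z := by
  have hkψ : Differentiable ℝ fun z => k * I * ψ z := hψ.const_mul _
  have hcoeff (j : Fin n) (z : Cn n) :
      complexDeriv ((-delVec) j) (fun y => k * I * ψ y) z + k * wd j (cplx φ) z =
        k * delCoeff φ ψ j z := by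
    rw [Pi.neg_apply, complexDeriv_neg, complexDeriv_const_mul _ (hψ z), delCoeff,
      wd_eq_complexDeriv j ψ]
    ring
  funext z
  rw [dbarSt_eq_symbolOp k φ (hkψ.cexp.fun_smul hu), symbolOp_cexp_smul _ _ _ (hkψ z) (hu z)]
  simp only [hcoeff]

theorem cexp_neg_smul_boxK_cexp_smul (k : ℝ) (hφ : ContDiff ℝ 2 φ) (hψ : ContDiff ℝ 2 ψ)
    {u : Cn n → ExtA n} (hu : ContDiff ℝ 2 u) (z : Cn n) :
    exp (-k * I * ψ z) • boxK k φ (fun x => exp (k * I * ψ x) • u x) z =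
      symbolOp aOpL delbarVec (fun j z => k * delbarCoeff φ ψ j z)
          (symbolOp aStL (-delVec) (fun j z => k * delCoeff φ ψ j z) u) z
        + symbolOp aStL (-delVec) (fun j z => k * delCoeff φ ψ j z)
          (symbolOp aOpL delbarVec (fun j z => k * delbarCoeff φ ψ j z) u) z := by
  have hψ' := hψ.differentiable two_ne_zero
  have hu' := hu.differentiable two_ne_zero
  have hα (j : Fin n) := (differentiable_delbarCoeff hφ hψ j).const_mul (k : ℂ)
  have hβ (j : Fin n) := (differentiable_delCoeff hφ hψ j).const_mul (k : ℂ)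
  rw [boxK, dbarS_cexp_smul k hψ' hu', dbarSt_cexp_smul k hψ' hu',
    dbarS_cexp_smul k hψ' (differentiable_symbolOp _ _ hβ hu),
    dbarSt_cexp_smul k hψ' (differentiable_symbolOp _ _ hα hu), ← smul_add, smul_smul,
    ← exp_add]
  simp

theorem complexDeriv_delbarVec_delCoeff (k : ℝ) (hφ : ContDiff ℝ 2 φ) (hψ : ContDiff ℝ 2 ψ)
    (j t : Fin n) (z : Cn n) :
    complexDeriv (delbarVec j) (fun x => k * delCoeff φ ψ t x) z =
      k * wdb j (delCoeff φ ψ t) z := by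
  rw [complexDeriv_const_mul _ (differentiable_delCoeff hφ hψ t z), wdb_eq_complexDeriv]

theorem complexDeriv_neg_delVec_delbarCoeff (k : ℝ) (hφ : ContDiff ℝ 2 φ) (hψ : ContDiff ℝ 2 ψ)
    (j t : Fin n) (z : Cn n) :
    complexDeriv ((-delVec) t) (fun x => k * delbarCoeff φ ψ j x) z =
      -(k * wd t (delbarCoeff φ ψ j) z) := by
  rw [Pi.neg_apply, complexDeriv_neg,
    complexDeriv_const_mul _ (differentiable_delbarCoeff hφ hψ j z), wd_eq_complexDeriv]

theorem normalOrdered_neg_delVec_delbarVec (k : ℝ) (j : Fin n) (a b : Cn n → ℂ) {u : Cn n → ExtA n}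
    (hu : ContDiff ℝ 2 u) (z : Cn n) :
    normalOrdered ((-delVec) j) (fun x => k * b x) (delbarVec j) (fun x => k * a x) u z =
      ((k : ℂ) ^ 2 * (a z * b z)) • u z + (k : ℂ) • b z • wdbE j u z - (k : ℂ) • a z • wdE j u z
        - wdE j (wdbE j u) z := by
  have hu' : Differentiable ℝ u := hu.differentiable two_ne_zero
  rw [wdbE_eq_complexDeriv j hu', wdE_eq_complexDeriv j hu',
    wdE_eq_complexDeriv j (differentiable_complexDeriv _ hu), normalOrdered, Pi.neg_apply,
    complexDeriv_neg, complexDeriv_neg]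
  module

end KodairaLaplacian

theorem statement12_general {n : ℕ} (k : ℝ)
    {φ : Cn n → ℝ} (hφ : ContDiff ℝ 2 φ)
    {ψ : Cn n → ℂ} (hψ : ContDiff ℝ 2 ψ)
    {B : Cn n → ExtA n} (hB : ContDiff ℝ 2 B) (z : Cn n) :
    Complex.exp (- (k : ℂ) * Complex.I * ψ z) •
        boxK k φ (fun x => Complex.exp ((k : ℂ) * Complex.I * ψ x) • B x) z =
      ((k : ℂ) ^ 2 *
          ∑ j : Fin n,
            (Complex.I * wdb j ψ z + wdb j (cplx φ) z) *
              (- Complex.I * wd j ψ z + wd j (cplx φ) z)) • B z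
      + (k : ℂ) • ∑ j : Fin n, ∑ t : Fin n,
          (wdb j (fun x => - Complex.I * wd t ψ x + wd t (cplx φ) x) z) •
            aOp j (aSt t (B z))
      - (k : ℂ) • ∑ j : Fin n, ∑ t : Fin n,
          (wd t (fun x => Complex.I * wdb j ψ x + wdb j (cplx φ) x) z) •
            aSt t (aOp j (B z))
      + (k : ℂ) • ∑ j : Fin n,
          (- Complex.I * wd j ψ z + wd j (cplx φ) z) • wdbE j B z
      - (k : ℂ) • ∑ j : Fin n,
          (Complex.I * wdb j ψ z + wdb j (cplx φ) z) • wdE j B z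
      - ∑ j : Fin n, wdE j (wdbE j B) z := by
  rw [cexp_neg_smul_boxK_cexp_smul k hφ hψ hB,
    symbolOp_anticommutator aOp_aSt_anticomm delbarVec (-delVec)
      (fun j => (differentiable_delbarCoeff hφ hψ j).const_mul _)
      (fun j => (differentiable_delCoeff hφ hψ j).const_mul _) hB]
  simp only [normalOrdered_neg_delVec_delbarVec _ _ _ _ hB,
    complexDeriv_delbarVec_delCoeff k hφ hψ, complexDeriv_neg_delVec_delbarCoeff k hφ hψ,
    aOpL_apply, aStL_apply, Finset.sum_add_distrib, Finset.sum_sub_distrib,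
    Finset.sum_neg_distrib, Finset.smul_sum, Finset.mul_sum, Finset.sum_smul, neg_smul, mul_smul]
  unfold delCoeff delbarCoeff
  abel

/-- the conjugated Laplacian `e^{−ikψ} □_k (e^{ikψ} B)`. -/
theorem statement12 (n q : ℕ) (hn : 1 ≤ n) (hq : q ≤ n) (k : ℝ)
    (φ : Cn n → ℝ) (hφ : ContDiff ℝ (⊤ : ℕ∞) φ)
    (ψ : Cn n → ℂ) (hψ : ContDiff ℝ (⊤ : ℕ∞) ψ)
    (B : Cn n → ExtA n) (hB : ContDiff ℝ (⊤ : ℕ∞) B) (z : Cn n) :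
    Complex.exp (- (k : ℂ) * Complex.I * ψ z) •
        boxK k φ (fun x => Complex.exp ((k : ℂ) * Complex.I * ψ x) • B x) z =
      ((k : ℂ) ^ 2 *
          ∑ j : Fin n,
            (Complex.I * wdb j ψ z + wdb j (cplx φ) z) *
              (- Complex.I * wd j ψ z + wd j (cplx φ) z)) • B z
      + (k : ℂ) • ∑ j : Fin n, ∑ t : Fin n,
          (wdb j (fun x => - Complex.I * wd t ψ x + wd t (cplx φ) x) z) •
            aOp j (aSt t (B z))
      - (k : ℂ) • ∑ j : Fin n, ∑ t : Fin n,
          (wd t (fun x => Complex.I * wdb j ψ x + wdb j (cplx φ) x) z) •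
            aSt t (aOp j (B z))
      + (k : ℂ) • ∑ j : Fin n,
          (- Complex.I * wd j ψ z + wd j (cplx φ) z) • wdbE j B z
      - (k : ℂ) • ∑ j : Fin n,
          (Complex.I * wdb j ψ z + wdb j (cplx φ) z) • wdE j B z
      - ∑ j : Fin n, wdE j (wdbE j B) z :=
  have two_le : (2 : WithTop ℕ∞) ≤ (⊤ : ℕ∞) := WithTop.coe_le_coe.2 le_top
  statement12_general k (hφ.of_le two_le) (hψ.of_le two_le) (hB.of_le two_le) z
end
end
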